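/- arXiv:1302.1715 — 5 statements merged into one kernel-verified Lean document; each statement's English description precedes it below -/
import Mathlib

section
/- Let p > 3 be a prime and let m be an integer with m(m-16)(m-256) not divisible by p. Then, as elements of Z/pZ, Σ_{k=0}^{(p-1)/2} C(2k,k)^3 / m^k ≡ (m(m-16) | p) · Σ_{k=0}^{⌊p/6⌋} C(2k,k)·C(3k,k)·C(6k,3k) · (m/(m-16)^3)^k ≡ (m(m-256) | p) · Σ_{k=0}^{⌊p/6⌋} C(2k,k)·C(3k,k)·C(6k,3k) · (m^2/(256-m)^3)^k (mod p), where divisions denote multiplication by inverses in Z/pZ. -/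
open Finset

/-- common recurrence facts -/
lemma cen_succ (K : Type*) [CommRing K] (s : ℕ) :
    ((s : K) + 1) * (Nat.choose (2 * (s + 1)) (s + 1) : K)
      = 2 * (2 * s + 1) * (Nat.choose (2 * s) s : K) := by
  have h := Nat.succ_mul_centralBinom_succ s
  simp only [Nat.centralBinom_eq_two_mul_choose] at h
  have h2 := congrArg (Nat.cast : ℕ → K) h
  push_cast at h2
  exact h2

lemma desc_succ_cast (s t : ℕ) :
    ((s.descFactorial (t + 1) : ℕ) : ℚ) = ((s : ℚ) - t) * (s.descFactorial t : ℚ) := by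
  rw [Nat.descFactorial_succ]
  rcases le_or_gt t s with h | h
  · push_cast [Nat.cast_sub h]; ring
  · rw [Nat.descFactorial_eq_zero_iff_lt.2 h]; simp

/-- the two summands (first identity) -/
noncomputable def FA (j k : ℕ) : ℚ :=
  4 ^ j * (1 / 16) ^ k * (Nat.choose (2 * (j + k)) (j + k) : ℚ)
    * ((j + k).descFactorial (3 * k) : ℚ) / (k.factorial : ℚ) ^ 3

noncomputable def FB (j k : ℕ) : ℚ :=
  64 ^ j * (-1 / 64) ^ k * (Nat.choose (2 * (j + 2 * k)) (j + 2 * k) : ℚ)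
    * ((j + 2 * k).descFactorial (3 * k) : ℚ) / (k.factorial : ℚ) ^ 3

/-- Certificates, at index k+1. -/
noncomputable def GA (j k : ℕ) : ℚ :=
  -64 * (3 * j + 2) * 4 ^ j * (1 / 16) ^ (k + 1)
    * (Nat.choose (2 * (j + k + 1)) (j + k + 1) : ℚ)
    * ((j + k + 1).descFactorial (3 * k + 2) : ℚ) / (k.factorial : ℚ) ^ 3

noncomputable def GB (j k : ℕ) : ℚ :=
  -128 * (6 * j + 5) * 64 ^ j * (-1 / 64) ^ (k + 1)
    * (Nat.choose (2 * (j + 2 * k + 2)) (j + 2 * k + 2) : ℚ)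
    * ((j + 2 * k + 2).descFactorial (3 * k + 2) : ℚ) / (k.factorial : ℚ) ^ 3

lemma wzA_zero (j : ℕ) :
    ((j : ℚ) + 1) ^ 3 * FA (j + 1) 0 - 8 * (2 * j + 1) ^ 3 * FA j 0 = GA j 0 := by
  have h1 := cen_succ ℚ j
  simp only [FA, GA, Nat.succ_descFactorial_succ, Nat.descFactorial_succ, Nat.descFactorial_zero]
  simp only [mul_zero, add_zero, zero_add, Nat.sub_zero, mul_one, pow_zero, pow_one, Nat.factorial_zero,
    Nat.descFactorial_zero]
  push_cast
  generalize (Nat.choose (2 * (j + 1)) (j + 1) : ℚ) = X at *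
  generalize (Nat.choose (2 * j) j : ℚ) = Y at *
  have hj : (j : ℚ) + 1 ≠ 0 := by positivity
  have : X = 2 * (2 * j + 1) * Y / (j + 1) := by field_simp; linarith
  subst this
  field_simp
  ring

lemma wzA_succ (j k : ℕ) :
    ((j : ℚ) + 1) ^ 3 * FA (j + 1) (k + 1) - 8 * (2 * j + 1) ^ 3 * FA j (k + 1)
      = GA j (k + 1) - GA j k := by
  have h1 := cen_succ ℚ (j + k + 1)
  have d1 := desc_succ_cast (j + k + 1) (3 * k + 2)
  have d2 := desc_succ_cast (j + k + 1) (3 * k + 3)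
  have e1 : (j + k + 2).descFactorial (3 * k + 3)
      = (j + k + 2) * (j + k + 1).descFactorial (3 * k + 2) := Nat.succ_descFactorial_succ _ _
  have e2 : (j + k + 2).descFactorial (3 * k + 5)
      = (j + k + 2) * (j + k + 1).descFactorial (3 * k + 4) := Nat.succ_descFactorial_succ _ _
  have hf : (k + 1).factorial = (k + 1) * k.factorial := rfl
  simp only [FA, GA]
  rw [show j + 1 + (k + 1) = j + k + 2 by ring, show j + (k + 1) = j + k + 1 by ring,
    show 3 * (k + 1) = 3 * k + 3 by ring, hf]
  simp only [show j + k + 1 + 1 = j + k + 2 by ring, show 3 * k + 3 + 2 = 3 * k + 5 by ring,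
    show 3 * k + 2 + 1 = 3 * k + 3 by ring, show 3 * k + 3 + 1 = 3 * k + 4 by ring] at *
  rw [e1, e2]
  push_cast at *
  rw [d2, d1]
  generalize (Nat.choose (2 * (j + k + 2)) (j + k + 2) : ℚ) = X at *
  generalize (Nat.choose (2 * (j + k + 1)) (j + k + 1) : ℚ) = Y at *
  generalize (Nat.descFactorial (j + k + 1) (3 * k + 2) : ℚ) = D at *
  have hj : (j : ℚ) + k + 2 ≠ 0 := by positivity
  have hF : (k.factorial : ℚ) ≠ 0 := by positivity
  have : X = 2 * (2 * (j + k + 1) + 1) * Y / (j + k + 2) := by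
    field_simp; linarith
  subst this
  field_simp
  ring

lemma wzB_zero (j : ℕ) :
    ((j : ℚ) + 1) ^ 3 * FB (j + 1) 0 - 8 * (2 * j + 1) ^ 3 * FB j 0 = GB j 0 := by
  have h1 := cen_succ ℚ j
  have h2 := cen_succ ℚ (j + 1)
  simp only [FB, GB, Nat.succ_descFactorial_succ, Nat.descFactorial_succ, Nat.descFactorial_zero]
  simp only [mul_zero, add_zero, zero_add, Nat.sub_zero, mul_one, pow_zero, pow_one, Nat.factorial_zero,
    Nat.descFactorial_zero]
  simp only [show j + 1 + 1 = j + 2 by ring] at *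
  push_cast at *
  generalize (Nat.choose (2 * (j + 2)) (j + 2) : ℚ) = Z at *
  generalize (Nat.choose (2 * (j + 1)) (j + 1) : ℚ) = X at *
  generalize (Nat.choose (2 * j) j : ℚ) = Y at *
  have hj : (j : ℚ) + 1 ≠ 0 := by positivity
  have hj2 : (j : ℚ) + 2 ≠ 0 := by positivity
  have : X = 2 * (2 * j + 1) * Y / (j + 1) := by field_simp; linarith
  subst this
  have : Z = 2 * (2 * (j + 1) + 1) * (2 * (2 * j + 1) * Y / (j + 1)) / (j + 2) := by
    rw [eq_div_iff hj2, ← h2]; ring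
  subst this
  field_simp
  ring

lemma wzB_succ (j k : ℕ) :
    ((j : ℚ) + 1) ^ 3 * FB (j + 1) (k + 1) - 8 * (2 * j + 1) ^ 3 * FB j (k + 1)
      = GB j (k + 1) - GB j k := by
  have h1 := cen_succ ℚ (j + 2 * k + 2)
  have h2 := cen_succ ℚ (j + 2 * k + 3)
  have d1 := desc_succ_cast (j + 2 * k + 2) (3 * k + 2)
  have e1 : (j + 2 * k + 3).descFactorial (3 * k + 3)
      = (j + 2 * k + 3) * (j + 2 * k + 2).descFactorial (3 * k + 2) :=
    Nat.succ_descFactorial_succ _ _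
  have e2 : (j + 2 * k + 4).descFactorial (3 * k + 5)
      = (j + 2 * k + 4) * (j + 2 * k + 3).descFactorial (3 * k + 4) :=
    Nat.succ_descFactorial_succ _ _
  have e3 : (j + 2 * k + 3).descFactorial (3 * k + 4)
      = (j + 2 * k + 3) * (j + 2 * k + 2).descFactorial (3 * k + 3) :=
    Nat.succ_descFactorial_succ _ _
  have hf : (k + 1).factorial = (k + 1) * k.factorial := rfl
  simp only [FB, GB]
  rw [show j + 1 + 2 * (k + 1) = j + 2 * k + 3 by ring,
    show j + 2 * (k + 1) = j + 2 * k + 2 by ring,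
    show 3 * (k + 1) = 3 * k + 3 by ring, hf]
  simp only [show j + 2 * k + 2 + 2 = j + 2 * k + 4 by ring,
    show j + 2 * k + 3 + 1 = j + 2 * k + 4 by ring,
    show j + 2 * k + 2 + 1 = j + 2 * k + 3 by ring,
    show 3 * k + 3 + 2 = 3 * k + 5 by ring,
    show 3 * k + 2 + 1 = 3 * k + 3 by ring] at *
  rw [e2, e3, e1]
  push_cast at *
  rw [d1]
  generalize (Nat.choose (2 * (j + 2 * k + 4)) (j + 2 * k + 4) : ℚ) = Z at *
  generalize (Nat.choose (2 * (j + 2 * k + 3)) (j + 2 * k + 3) : ℚ) = X at *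
  generalize (Nat.choose (2 * (j + 2 * k + 2)) (j + 2 * k + 2) : ℚ) = Y at *
  generalize (Nat.descFactorial (j + 2 * k + 2) (3 * k + 2) : ℚ) = D at *
  have hj : (j : ℚ) + 2 * k + 3 ≠ 0 := by positivity
  have hj2 : (j : ℚ) + 2 * k + 4 ≠ 0 := by positivity
  have hF : (k.factorial : ℚ) ≠ 0 := by positivity
  have : X = 2 * (2 * (j + 2 * k + 2) + 1) * Y / (j + 2 * k + 3) := by
    rw [eq_div_iff hj, ← h1]; ring
  subst this
  have : Z = 2 * (2 * (j + 2 * k + 3) + 1) *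
      (2 * (2 * (j + 2 * k + 2) + 1) * Y / (j + 2 * k + 3)) / (j + 2 * k + 4) := by
    rw [eq_div_iff hj2, ← h2]; ring
  subst this
  field_simp
  ring

lemma sum_generic (F G : ℕ → ℕ → ℚ)
    (h0 : ∀ j : ℕ, ((j : ℚ) + 1) ^ 3 * F (j + 1) 0 - 8 * (2 * j + 1) ^ 3 * F j 0 = G j 0)
    (h1 : ∀ j k : ℕ, ((j : ℚ) + 1) ^ 3 * F (j + 1) (k + 1) - 8 * (2 * j + 1) ^ 3 * F j (k + 1)
      = G j (k + 1) - G j k)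
    (hG : ∀ j k, j < k → G j k = 0) (hF0 : F 0 0 = 1) (hF : ∀ k, F 0 (k + 1) = 0)
    (j : ℕ) : ∀ N, j ≤ N → ∑ k ∈ range (N + 1), F j k = (Nat.choose (2 * j) j : ℚ) ^ 3 := by
  induction j with
  | zero =>
    intro N _
    rw [sum_range_succ']
    simp [hF0, hF]
  | succ j ih =>
    intro N hN
    have hs : ∀ M, ((j : ℚ) + 1) ^ 3 * ∑ k ∈ range (M + 1), F (j + 1) k
        - 8 * (2 * j + 1) ^ 3 * ∑ k ∈ range (M + 1), F j k = G j M := by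
      intro M
      induction M with
      | zero => simpa using h0 j
      | succ M ihM =>
        rw [sum_range_succ, sum_range_succ (fun k => F j k)]
        linear_combination ihM + h1 j M
    have h := hs N
    rw [hG j N (by omega), ih N (by omega)] at h
    have hc := cen_succ ℚ j
    have hj : ((j : ℚ) + 1) ^ 3 ≠ 0 := by positivity
    apply mul_left_cancel₀ hj
    rw [← mul_pow, hc]
    linear_combination h

lemma sumA (j N : ℕ) (h : j ≤ N) :
    ∑ k ∈ range (N + 1), FA j k = (Nat.choose (2 * j) j : ℚ) ^ 3 := by
  refine sum_generic FA GA wzA_zero wzA_succ ?_ ?_ ?_ j N h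
  · intro j k hk
    rw [GA, Nat.descFactorial_eq_zero_iff_lt.2 (by omega)]; simp
  · simp [FA]
  · intro k
    rw [FA, Nat.descFactorial_eq_zero_iff_lt.2 (by omega)]; simp

lemma sumB (j N : ℕ) (h : j ≤ N) :
    ∑ k ∈ range (N + 1), FB j k = (Nat.choose (2 * j) j : ℚ) ^ 3 := by
  refine sum_generic FB GB wzB_zero wzB_succ ?_ ?_ ?_ j N h
  · intro j k hk
    rw [GB, Nat.descFactorial_eq_zero_iff_lt.2 (by omega)]; simp
  · simp [FB]
  · intro k
    rw [FB, Nat.descFactorial_eq_zero_iff_lt.2 (by omega)]; simp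

/-- the integer coefficient -/
def cf (s k : ℕ) : ℕ :=
  Nat.choose (2 * s) s * Nat.choose s (3 * k) * Nat.choose (3 * k) k * Nat.choose (2 * k) k

lemma fact3 (k : ℕ) : (3 * k).factorial
    = Nat.choose (3 * k) k * Nat.choose (2 * k) k * k.factorial ^ 3 := by
  have h1 := Nat.choose_mul_factorial_mul_factorial (show k ≤ 3 * k by omega)
  have h2 := Nat.choose_mul_factorial_mul_factorial (show k ≤ 2 * k by omega)
  rw [show 3 * k - k = 2 * k by omega] at h1
  rw [show 2 * k - k = k by omega] at h2
  rw [← h1, ← h2]; ring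

lemma cf_eq (s k : ℕ) : (cf s k : ℚ) = (Nat.choose (2 * s) s : ℚ)
    * (s.descFactorial (3 * k) : ℚ) / (k.factorial : ℚ) ^ 3 := by
  have hF : (k.factorial : ℚ) ≠ 0 := by positivity
  rw [cf, Nat.descFactorial_eq_factorial_mul_choose, fact3]
  push_cast
  field_simp

lemma intA (j N : ℕ) (h : j ≤ N) :
    ∑ k ∈ range (N + 1), (if 2 * k ≤ j then
      (1 : ℤ) ^ k * 4 ^ (j - 2 * k) * (cf (j - 2 * k + 3 * k) k : ℤ) else 0)
      = (Nat.choose (2 * j) j : ℤ) ^ 3 := by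
  have := sumA j N h
  have h2 : ((∑ k ∈ range (N + 1), (if 2 * k ≤ j then
      (1 : ℤ) ^ k * 4 ^ (j - 2 * k) * (cf (j - 2 * k + 3 * k) k : ℤ) else 0) : ℤ) : ℚ)
      = (((Nat.choose (2 * j) j : ℤ) ^ 3 : ℤ) : ℚ) := by
    push_cast
    rw [← this]
    refine sum_congr rfl fun k _ => ?_
    split_ifs with hk
    · obtain ⟨r, rfl⟩ := Nat.exists_eq_add_of_le hk
      rw [FA, show 2 * k + r - 2 * k = r by omega, show r + 3 * k = 2 * k + r + k by ring]
      push_cast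
      rw [cf_eq, pow_add, pow_mul, show (4 : ℚ) ^ 2 = 16 by norm_num]
      have : (16 : ℚ) ^ k * (1 / 16) ^ k = 1 := by rw [← mul_pow]; norm_num
      linear_combination (-(4 : ℚ) ^ r * (Nat.choose (2 * (2 * k + r + k)) (2 * k + r + k) : ℚ)
        * ((2 * k + r + k).descFactorial (3 * k) : ℚ) / (k.factorial : ℚ) ^ 3) * this
    · rw [FA, Nat.descFactorial_eq_zero_iff_lt.2 (by omega)]; simp
  exact_mod_cast h2

lemma intB (j N : ℕ) (h : j ≤ N) :
    ∑ k ∈ range (N + 1), (if 1 * k ≤ j then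
      (-1 : ℤ) ^ k * 64 ^ (j - 1 * k) * (cf (j - 1 * k + 3 * k) k : ℤ) else 0)
      = (Nat.choose (2 * j) j : ℤ) ^ 3 := by
  have := sumB j N h
  have h2 : ((∑ k ∈ range (N + 1), (if 1 * k ≤ j then
      (-1 : ℤ) ^ k * 64 ^ (j - 1 * k) * (cf (j - 1 * k + 3 * k) k : ℤ) else 0) : ℤ) : ℚ)
      = (((Nat.choose (2 * j) j : ℤ) ^ 3 : ℤ) : ℚ) := by
    push_cast
    rw [← this]
    refine sum_congr rfl fun k _ => ?_
    split_ifs with hk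
    · obtain ⟨r, rfl⟩ := Nat.exists_eq_add_of_le hk
      rw [FB, show 1 * k + r - 1 * k = r by omega, show r + 3 * k = 1 * k + r + 2 * k by ring]
      push_cast
      rw [cf_eq, pow_add, one_mul]
      have : (64 : ℚ) ^ k * (-1 / 64) ^ k = (-1) ^ k := by rw [← mul_pow]; norm_num
      linear_combination (-(64 : ℚ) ^ r * (Nat.choose (2 * (k + r + 2 * k)) (k + r + 2 * k) : ℚ)
        * ((k + r + 2 * k).descFactorial (3 * k) : ℚ) / (k.factorial : ℚ) ^ 3) * this
    · rw [FB, Nat.descFactorial_eq_zero_iff_lt.2 (by omega)]; simp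
  exact_mod_cast h2

section modp
variable (p : ℕ) [Fact p.Prime]

lemma cen_mod (n : ℕ) (hn : p = 2 * n + 1) (s : ℕ) (hs : s < p) :
    (Nat.choose (2 * s) s : ZMod p) = (-4) ^ s * (Nat.choose n s : ZMod p) := by
  have hnp : (2 : ZMod p) * n + 1 = 0 := by
    have := ZMod.natCast_self p
    conv at this => lhs; arg 1; rw [hn]
    push_cast at this; exact this
  induction s with
  | zero => simp
  | succ s ih =>
    have ih := ih (by omega)
    have h1 := cen_succ (ZMod p) s
    have h2 : ((s : ZMod p) + 1) * (Nat.choose n (s + 1) : ZMod p)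
        = (n - s) * (Nat.choose n s : ZMod p) := by
      have h := Nat.choose_succ_right_eq n s
      rcases le_or_gt s n with hle | hlt
      · have := congrArg (Nat.cast : ℕ → ZMod p) h
        push_cast [Nat.cast_sub hle] at this
        linear_combination this
      · rw [Nat.choose_eq_zero_of_lt hlt, Nat.choose_eq_zero_of_lt (by omega)]; simp
    have h3 : (s : ZMod p) + 1 ≠ 0 := by
      intro h
      have : ((s + 1 : ℕ) : ZMod p) = 0 := by push_cast; exact h
      rw [ZMod.natCast_eq_zero_iff] at this
      exact absurd (Nat.le_of_dvd (by omega) this) (by omega)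
    apply mul_left_cancel₀ h3
    rw [h1, ih, pow_succ]
    linear_combination (4 * (-4) ^ s) * h2 + (2 * (-4) ^ s * (Nat.choose n s : ZMod p)) * hnp

lemma cf_zero (n : ℕ) (hn : p = 2 * n + 1) (k r : ℕ) (hk : k ≤ n) (hk2 : n < 3 * k)
    (hr : r ≤ n) : (cf (r + 3 * k) k : ZMod p) = 0 := by
  have hpp : p.Prime := Fact.out
  rcases lt_or_ge (r + 3 * k) p with h | h
  · rw [cf]
    push_cast
    rw [cen_mod p n hn _ h, Nat.choose_eq_zero_of_lt (show n < r + 3 * k by omega)]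
    simp
  · have h1 := Nat.choose_mul_factorial_mul_factorial (show 3 * k ≤ r + 3 * k by omega)
    rw [show r + 3 * k - 3 * k = r by omega, fact3] at h1
    have hd : p ∣ (r + 3 * k).factorial := (hpp.dvd_factorial).2 h
    have hk' : ¬ p ∣ k.factorial ^ 3 := fun hh => by
      have := (hpp.dvd_factorial).1 (hpp.dvd_of_dvd_pow hh); omega
    have hr' : ¬ p ∣ r.factorial := fun hh => by
      have := (hpp.dvd_factorial).1 hh; omega
    rw [← h1] at hd
    rw [ZMod.natCast_eq_zero_iff, cf]
    rw [hpp.dvd_mul, or_iff_left hr', ← mul_assoc, hpp.dvd_mul, or_iff_left hk'] at hd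
    rw [mul_assoc, mul_assoc]
    exact Dvd.dvd.mul_left hd _

lemma cf_val (n : ℕ) (hn : p = 2 * n + 1) (k r : ℕ) (hk : 3 * k ≤ n) (hr : r + 3 * k < p) :
    (cf (r + 3 * k) k : ZMod p) = (Nat.choose (2 * k) k : ZMod p) * (Nat.choose (3 * k) k : ZMod p)
      * (Nat.choose (6 * k) (3 * k) : ZMod p) * ((-4) ^ r * (Nat.choose (n - 3 * k) r : ZMod p)) := by
  have h6 := cen_mod p n hn (3 * k) (by omega)
  rw [show 2 * (3 * k) = 6 * k by ring] at h6
  rw [cf]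
  push_cast
  rw [cen_mod p n hn _ hr, h6, pow_add]
  have h : (Nat.choose n (r + 3 * k) * Nat.choose (r + 3 * k) (3 * k))
      = Nat.choose n (3 * k) * Nat.choose (n - 3 * k) r := by
    rcases le_or_gt (r + 3 * k) n with hh | hh
    · rw [Nat.choose_mul (by omega) ]
      simp
    · rw [Nat.choose_eq_zero_of_lt hh, Nat.choose_eq_zero_of_lt (show n - 3 * k < r by omega)]
      simp
  have h2 := congrArg (Nat.cast : ℕ → ZMod p) h
  push_cast at h2
  linear_combination ((-4) ^ r * (-4) ^ (3 * k) * (Nat.choose (3 * k) k : ZMod p)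
    * (Nat.choose (2 * k) k : ZMod p)) * h2

lemma modpart (n : ℕ) (hn : p = 2 * n + 1) (e : ℕ) (he : e = 1 ∨ e = 2) (q σ x : ZMod p)
    (hI : ∀ j ≤ n, ∑ k ∈ range (n + 1), (if e * k ≤ j then
      σ ^ k * q ^ (j - e * k) * (cf (j - e * k + 3 * k) k : ZMod p) else 0)
      = (Nat.choose (2 * j) j : ZMod p) ^ 3) (t : ℕ) (ht : t = p / 6) (hp : 3 < p) :
    ∑ j ∈ range (n + 1), (Nat.choose (2 * j) j : ZMod p) ^ 3 * x ^ j
      = ∑ k ∈ range (t + 1), (Nat.choose (2 * k) k : ZMod p) * (Nat.choose (3 * k) k : ZMod p)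
      * (Nat.choose (6 * k) (3 * k) : ZMod p) * ((σ * x ^ e) ^ k * (1 - 4 * q * x) ^ (n - 3 * k)) := by
  have hpp : p.Prime := Fact.out
  have hp3 : ¬ 3 ∣ p := fun h => by
    have := (Nat.prime_dvd_prime_iff_eq Nat.prime_three hpp).1 h; omega
  have htn : t + 1 ≤ n + 1 := by omega
  have h1 : ∑ j ∈ range (n + 1), (Nat.choose (2 * j) j : ZMod p) ^ 3 * x ^ j
      = ∑ k ∈ range (n + 1), ∑ j ∈ range (n + 1), (if e * k ≤ j then
      σ ^ k * q ^ (j - e * k) * (cf (j - e * k + 3 * k) k : ZMod p) else 0) * x ^ j := by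
    rw [sum_comm]
    refine sum_congr rfl fun j hj => ?_
    rw [← hI j (by have := mem_range.1 hj; omega), sum_mul]
  rw [h1]
  symm
  apply Finset.sum_subset_zero_on_sdiff (range_mono htn)
  · intro k hk
    simp only [mem_sdiff, mem_range] at hk
    refine sum_eq_zero fun j hj => ?_
    have hj := mem_range.1 hj
    split_ifs with h
    · rw [cf_zero p n hn k _ (by omega) (by omega) (by omega)]; simp
    · simp
  · intro k hk
    have hk := mem_range.1 hk
    have hek : e * k ≤ 2 * k := by rcases he with rfl | rfl <;> omega
    have hek1 : k ≤ e * k := by rcases he with rfl | rfl <;> omega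
    have h3k : 3 * k ≤ n := by omega
    symm
    rw [show range (n + 1) = range (e * k + (n + 1 - e * k)) by congr 1; omega]
    rw [sum_range_add]
    rw [sum_eq_zero (s := range (e * k))]
    swap
    · intro j hj
      have hj := mem_range.1 hj
      rw [if_neg (by omega)]; simp
    rw [zero_add, sub_eq_neg_add, add_pow, mul_sum, mul_sum]
    symm
    apply Finset.sum_subset_zero_on_sdiff (range_mono (by omega))
    · intro r hr
      simp only [mem_sdiff, mem_range] at hr
      rw [if_pos (by omega), show e * k + r - e * k = r by omega,
        cf_val p n hn k r h3k (by omega), Nat.choose_eq_zero_of_lt (show n - 3 * k < r by omega)]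
      simp
    · intro r hr
      have hr := mem_range.1 hr
      rw [if_pos (by omega), show e * k + r - e * k = r by omega,
        cf_val p n hn k r h3k (by omega), pow_add, pow_mul,
        show -(4 * q * x) = (-4) * q * x by ring]
      simp only [mul_pow, one_pow]
      ring

end modp

theorem stmt_0 (p : ℕ) [Fact p.Prime] (hp : 3 < p) (m : ℤ)
    (hm : ¬ (p : ℤ) ∣ m * (m - 16) * (m - 256)) :
    (∑ k ∈ Finset.range ((p - 1) / 2 + 1),
        (Nat.choose (2 * k) k : ZMod p) ^ 3 / (m : ZMod p) ^ k)
      = ((legendreSym p (m * (m - 16)) : ℤ) : ZMod p) *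
          ∑ k ∈ Finset.range (p / 6 + 1),
            (Nat.choose (2 * k) k : ZMod p) * (Nat.choose (3 * k) k : ZMod p) *
              (Nat.choose (6 * k) (3 * k) : ZMod p) *
              ((m : ZMod p) / ((m : ZMod p) - 16) ^ 3) ^ k
    ∧
    (∑ k ∈ Finset.range ((p - 1) / 2 + 1),
        (Nat.choose (2 * k) k : ZMod p) ^ 3 / (m : ZMod p) ^ k)
      = ((legendreSym p (m * (m - 256)) : ℤ) : ZMod p) *
          ∑ k ∈ Finset.range (p / 6 + 1),
            (Nat.choose (2 * k) k : ZMod p) * (Nat.choose (3 * k) k : ZMod p) *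
              (Nat.choose (6 * k) (3 * k) : ZMod p) *
              ((m : ZMod p) ^ 2 / (256 - (m : ZMod p)) ^ 3) ^ k := by

  have hpp : p.Prime := Fact.out
  obtain ⟨n, hn⟩ : ∃ n, p = 2 * n + 1 := by
    rcases hpp.eq_two_or_odd' with h | h
    · omega
    · exact h
  have hn2 : (p - 1) / 2 = n := by omega
  have hpn : p / 2 = n := by omega
  have hp3 : ¬ 3 ∣ p := fun h => by
    have := (Nat.prime_dvd_prime_iff_eq Nat.prime_three hpp).1 h; omega
  rw [← ZMod.intCast_zmod_eq_zero_iff_dvd] at hm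
  push_cast at hm
  obtain ⟨⟨hM, hU⟩, hV⟩ : ((m : ZMod p) ≠ 0 ∧ (m : ZMod p) - 16 ≠ 0) ∧ (m : ZMod p) - 256 ≠ 0 := by
    simpa only [mul_eq_zero, not_or, ne_eq] using hm
  rw [hn2]
  rw [legendreSym.eq_pow, legendreSym.eq_pow, hpn]
  push_cast
  generalize (m : ZMod p) = M at *
  have hMn : M ^ n * M ^ n = 1 := by
    rw [← pow_add, show n + n = p - 1 by omega]
    exact ZMod.pow_card_sub_one_eq_one hM
  have hx : ∑ k ∈ range (n + 1), (Nat.choose (2 * k) k : ZMod p) ^ 3 / M ^ k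
      = ∑ k ∈ range (n + 1), (Nat.choose (2 * k) k : ZMod p) ^ 3 * M⁻¹ ^ k :=
    sum_congr rfl fun k _ => by rw [inv_pow, div_eq_mul_inv]
  rw [hx]
  constructor
  · rw [modpart p n hn 2 (Or.inr rfl) 4 1 M⁻¹ ?_ (p / 6) rfl hp, mul_sum]
    · refine sum_congr rfl fun k hk => ?_
      have hk := mem_range.1 hk
      have h3k : 3 * k ≤ n := by omega
      obtain ⟨r, hr⟩ := Nat.exists_eq_add_of_le h3k
      rw [show n - 3 * k = r by omega]
      have e1 : 1 - 4 * 4 * M⁻¹ = (M - 16) * M⁻¹ := by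
        field_simp
        ring
      rw [e1]
      have e2 : (M * (M - 16)) ^ n * (M / (M - 16) ^ 3) ^ k
          = (1 * M⁻¹ ^ 2) ^ k * ((M - 16) * M⁻¹) ^ r := by
        have e3 : (M - 16) ^ n = (M - 16) ^ (3 * k) * (M - 16) ^ r := by rw [hr, pow_add]
        have e4 : M ^ n * (M ^ (3 * k) * M ^ r) = 1 := by rw [← pow_add, ← hr, hMn]
        have e5 : M ^ n = (M ^ (3 * k))⁻¹ * (M ^ r)⁻¹ := by
          rw [← mul_inv]; exact eq_inv_of_mul_eq_one_left e4
        rw [mul_pow, e3, e5, div_pow, ← pow_mul, one_mul, mul_pow, inv_pow, inv_pow, inv_pow,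
          ← pow_mul, pow_mul M 3 k, pow_mul M 2 k, pow_mul (M - 16) 3 k]
        field_simp
        try ring
      rw [← e2]
      ring
    · intro j hj
      have := congrArg (Int.cast : ℤ → ZMod p) (intA j n hj)
      push_cast at this
      exact this
  · rw [modpart p n hn 1 (Or.inl rfl) 64 (-1) M⁻¹ ?_ (p / 6) rfl hp, mul_sum]
    · refine sum_congr rfl fun k hk => ?_
      have hk := mem_range.1 hk
      have h3k : 3 * k ≤ n := by omega
      obtain ⟨r, hr⟩ := Nat.exists_eq_add_of_le h3k
      rw [show n - 3 * k = r by omega]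
      have e1 : 1 - 4 * 64 * M⁻¹ = (M - 256) * M⁻¹ := by
        field_simp
        ring
      rw [e1]
      have e2 : (M * (M - 256)) ^ n * (M ^ 2 / (256 - M) ^ 3) ^ k
          = (-1 * M⁻¹ ^ 1) ^ k * ((M - 256) * M⁻¹) ^ r := by
        have e0 : M ^ 2 / (256 - M) ^ 3 = (-1) * (M ^ 2 / (M - 256) ^ 3) := by
          rw [show (256 - M) ^ 3 = -((M - 256) ^ 3) by ring, div_neg]; ring
        have e3 : (M - 256) ^ n = (M - 256) ^ (3 * k) * (M - 256) ^ r := by rw [hr, pow_add]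
        have e4 : M ^ n * (M ^ (3 * k) * M ^ r) = 1 := by rw [← pow_add, ← hr, hMn]
        have e5 : M ^ n = (M ^ (3 * k))⁻¹ * (M ^ r)⁻¹ := by
          rw [← mul_inv]; exact eq_inv_of_mul_eq_one_left e4
        rw [e0, mul_pow, e3, e5, mul_pow (-1), div_pow, mul_pow (-1), mul_pow, pow_one, inv_pow,
          inv_pow, ← pow_mul, ← pow_mul, pow_mul M 3 k, pow_mul M 2 k, pow_mul (M - 256) 3 k]
        field_simp
        try ring
      rw [← e2]
      ring
    · intro j hj
      have := congrArg (Int.cast : ℤ → ZMod p) (intB j n hj)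
      push_cast at this
      exact this
end

section
/- Let p > 3 be a prime and let t be an integer with 4t ≢ 5 (mod p) and 4t ≢ -5 (mod p). Then Σ_{k=0}^{(p-1)/2} C(2k,k)^2·C(3k,k) · ((1-t^2)/108)^k ≡ (5-4t | p) · Σ_{k=0}^{⌊p/6⌋} C(2k,k)·C(3k,k)·C(6k,3k) · ((t-1)(t+1)^3/(432(4t-5)^3))^k ≡ (5+4t | p) · Σ_{k=0}^{⌊p/6⌋} C(2k,k)·C(3k,k)·C(6k,3k) · ((t+1)(1-t)^3/(432(4t+5)^3))^k (mod p). -/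
open Finset

namespace Aux
open Polynomial

variable {p : ℕ} [Fact p.Prime]

/-- `1 - t^2` -/
noncomputable def z (p : ℕ) : (ZMod p)[X] := (1 - X) * (1 + X)
/-- `5 - 4t` -/
noncomputable def s (p : ℕ) : (ZMod p)[X] := 5 - 4 * X
/-- the derivation `(1-t^2)(5-4t) d/dt` -/
noncomputable def d (f : (ZMod p)[X]) : (ZMod p)[X] := z p * s p * derivative f

/-- the third order differential operator -/
noncomputable def L (f : (ZMod p)[X]) : (ZMod p)[X] :=
  9 * d (d (d f)) + 108 * z p * d (d f) - 8 * z p * (16 * X ^ 2 + 5 * X - 11) * d f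
    + 8 * z p * X * s p ^ 3 * f


lemma d_add (f g : (ZMod p)[X]) : d (f + g) = d f + d g := by
  simp [d, mul_add]

lemma d_mul (f g : (ZMod p)[X]) : d (f * g) = d f * g + f * d g := by
  simp only [d, derivative_mul]; ring

lemma d_C_mul (a : ZMod p) (g : (ZMod p)[X]) : d (C a * g) = C a * d g := by
  simp only [d, derivative_C_mul]; ring

lemma d_sub (f g : (ZMod p)[X]) : d (f - g) = d f - d g := by
  simp [d, mul_sub]

lemma L_add (f g : (ZMod p)[X]) : L (f + g) = L f + L g := by
  simp only [L, d_add]; ring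

lemma L_sub (f g : (ZMod p)[X]) : L (f - g) = L f - L g := by
  simp only [L, d_sub]; ring

lemma L_C_mul (a : ZMod p) (g : (ZMod p)[X]) : L (C a * g) = C a * L g := by
  simp only [L, d_C_mul]; ring

lemma d_pow {A r : (ZMod p)[X]} (h : d A = A * r) (n : ℕ) :
    d (A ^ n) = A ^ n * ((n : (ZMod p)[X]) * r) := by
  induction n with
  | zero => simp [d]
  | succ n ih => rw [pow_succ, d_mul, ih, h]; push_cast; ring

lemma L_of {T q : (ZMod p)[X]} (h : d T = T * q) :
    L T = T * (9 * (q ^ 3 + 3 * q * d q + d (d q)) + 108 * z p * (q ^ 2 + d q)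
      - 8 * z p * (16 * X ^ 2 + 5 * X - 11) * q + 8 * z p * X * s p ^ 3) := by
  simp only [L, h, d_mul, d_add]; ring

lemma d_oneSub : d (1 - X : (ZMod p)[X]) = (1 - X) * (-(1 + X) * s p) := by
  simp [d, z]; ring
lemma d_oneAdd : d (1 + X : (ZMod p)[X]) = (1 + X) * ((1 - X) * s p) := by
  simp [d, z]; ring
lemma d_s : d (s p : (ZMod p)[X]) = s p * (-4 * z p) := by
  simp [d, s]; ring
lemma d_z : d (z p : (ZMod p)[X]) = z p * (-2 * X * s p) := by
  simp [d, z]; ring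

lemma L_z_pow (k : ℕ) : L (z p ^ k) = -4 * X * s p ^ 3 *
    (18 * (k : (ZMod p)[X]) ^ 3 * z p ^ k
      - (2 * (k : (ZMod p)[X]) + 1) * (3 * (k : (ZMod p)[X]) + 1) * (3 * (k : (ZMod p)[X]) + 2) * z p ^ (k + 1)) := by
  rw [L_of (d_pow d_z k)]
  simp only [d, z, s, derivative_mul, derivative_add, derivative_sub, derivative_one, derivative_X,
    derivative_natCast, derivative_ofNat, derivative_neg, derivative_zero]
  ring

/-- the basic terms on the right -/
noncomputable def T (p m k : ℕ) : (ZMod p)[X] :=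
  s p ^ (m - 3 * k) * ((1 - X) * (1 + X) ^ 3) ^ k

lemma d_T {m k : ℕ} (hm : (2 * m + 1 : (ZMod p)[X]) = 0) (hk : 3 * k ≤ m) :
    d (T p m k) = T p m k * ((k : (ZMod p)[X]) * (2 * (2 * X ^ 2 - 14 * X + 11)) + 2 * z p) := by
  have hV : d ((1 - X) * (1 + X) ^ 3 : (ZMod p)[X]) = ((1 - X) * (1 + X) ^ 3) *
      (-(1 + X) * s p + 3 * ((1 - X) * s p)) := by
    rw [d_mul, d_oneSub, d_pow d_oneAdd]; push_cast; ring
  rw [T, d_mul, d_pow d_s, d_pow hV, Nat.cast_sub hk]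
  push_cast
  generalize ((1 - X) * (1 + X) ^ 3 : (ZMod p)[X]) ^ k = V
  generalize (s p) ^ (m - 3 * k) = S
  simp only [z, s]
  linear_combination (-2 * (1 - X) * (1 + X) * V * S) * hm

lemma L_T {m k : ℕ} (hm : (2 * m + 1 : (ZMod p)[X]) = 0) (hk : 3 * k ≤ m) :
    L (T p m k) = (2 * X ^ 2 - 14 * X + 11) * (72 * s p ^ 3 * (k : (ZMod p)[X]) ^ 3 * T p m k
      - 4 * (2 * (k : (ZMod p)[X]) + 1) * (6 * (k : (ZMod p)[X]) + 1) * (6 * (k : (ZMod p)[X]) + 5) * ((1 - X) * (1 + X) ^ 3) * T p m k) := by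
  rw [L_of (d_T hm hk)]
  generalize T p m k = S
  simp only [d, z, s, derivative_mul, derivative_add, derivative_sub, derivative_one, derivative_X,
    derivative_natCast, derivative_ofNat, derivative_zero, derivative_X_pow, derivative_C]
  simp only [map_natCast]
  push_cast
  ring

lemma T_succ {m k : ℕ} (hk : 3 * (k + 1) ≤ m) :
    s p ^ 3 * T p m (k + 1) = ((1 - X) * (1 + X) ^ 3) * T p m k := by
  have : m - 3 * k = m - 3 * (k + 1) + 3 := by omega
  rw [T, T, this, pow_succ _ k, pow_add]; ring

lemma fac_rel (n : ℕ) : (Nat.centralBinom n) * n.factorial ^ 2 = (2 * n).factorial := by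
  have := Nat.choose_mul_factorial_mul_factorial (show n ≤ 2 * n by omega)
  rw [show 2 * n - n = n by omega] at this
  rw [Nat.centralBinom, ← this]; ring

lemma fac_rel3 (n : ℕ) : (Nat.choose (3 * n) n) * n.factorial * (2 * n).factorial
    = (3 * n).factorial := by
  have := Nat.choose_mul_factorial_mul_factorial (show n ≤ 3 * n by omega)
  rwa [show 3 * n - n = 2 * n by omega] at this

/-- left coefficients -/
def A (k : ℕ) : ℕ := Nat.choose (2 * k) k ^ 2 * Nat.choose (3 * k) k
/-- right coefficients -/
def B (k : ℕ) : ℕ := Nat.choose (2 * k) k * Nat.choose (3 * k) k * Nat.choose (6 * k) (3 * k)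

lemma A_fac (k : ℕ) : A k * k.factorial ^ 5 = (2 * k).factorial * (3 * k).factorial := by
  have h1 := fac_rel k
  have h2 := fac_rel3 k
  rw [Nat.centralBinom] at h1
  have h0 := Nat.factorial_pos k
  rw [← h2, A]
  nth_rewrite 1 [← h1]
  rw [← h1]
  ring

lemma B_fac (k : ℕ) : B k * (k.factorial ^ 3 * (3 * k).factorial) = (6 * k).factorial := by
  have h1 := fac_rel k
  have h2 := fac_rel3 k
  have h3 := fac_rel (3 * k)
  rw [Nat.centralBinom] at h1 h3
  rw [show 2 * (3 * k) = 6 * k by ring] at h3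
  rw [← h3, B]
  have : (3 * k).factorial ^ 2 = (3 * k).factorial *
    ((3 * k).choose k * k.factorial * ((2 * k).choose k * k.factorial ^ 2)) := by
    rw [h1, h2]; ring
  rw [this]; ring

lemma A_succ (k : ℕ) : (k + 1) ^ 3 * A (k + 1) = 6 * (2 * k + 1) * (3 * k + 1) * (3 * k + 2) * A k := by
  have h0 := A_fac k
  have h1 := A_fac (k + 1)
  have hk := Nat.factorial_pos k
  rw [show 2 * (k + 1) = 2 * k + 1 + 1 by ring, show 3 * (k + 1) = 3 * k + 1 + 1 + 1 by ring] at h1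
  simp only [Nat.factorial_succ] at h1
  apply Nat.eq_of_mul_eq_mul_right (show 0 < (k + 1) ^ 2 * k.factorial ^ 5 by positivity)
  calc _ = A (k + 1) * ((k + 1) * k.factorial) ^ 5 := by ring
    _ = _ := h1
    _ = 6 * (2 * k + 1) * (3 * k + 1) * (3 * k + 2) * (k + 1) ^ 2 *
      ((2 * k).factorial * (3 * k).factorial) := by ring
    _ = _ := by rw [← h0]; ring

lemma B_succ (k : ℕ) : (k + 1) ^ 3 * B (k + 1) = 24 * (2 * k + 1) * (6 * k + 1) * (6 * k + 5) * B k := by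
  have h0 := B_fac k
  have h1 := B_fac (k + 1)
  have hk := Nat.factorial_pos k
  have hk3 := Nat.factorial_pos (3 * k)
  rw [show 6 * (k + 1) = 6 * k + 1 + 1 + 1 + 1 + 1 + 1 by ring,
    show 3 * (k + 1) = 3 * k + 1 + 1 + 1 by ring] at h1
  simp only [Nat.factorial_succ] at h1
  apply Nat.eq_of_mul_eq_mul_right (show 0 < (3 * k + 1) * (3 * k + 2) * (3 * k + 3) *
    (k.factorial ^ 3 * (3 * k).factorial) by positivity)
  calc _ = B (k + 1) * (((k + 1) * k.factorial) ^ 3 * ((3 * k + 1 + 1 + 1) * ((3 * k + 1 + 1) *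
        ((3 * k + 1) * (3 * k).factorial)))) := by ring
    _ = _ := h1
    _ = 24 * (2 * k + 1) * (6 * k + 1) * (6 * k + 5) * ((3 * k + 1) * (3 * k + 2) * (3 * k + 3)) *
      (6 * k).factorial := by ring
    _ = _ := by rw [← h0]; ring

lemma small_ne (hp : 3 < p) : (2 : ZMod p) ≠ 0 ∧ (3 : ZMod p) ≠ 0 := by
  constructor
  · intro h
    have : ((2 : ℕ) : ZMod p) = 0 := by exact_mod_cast h
    rw [ZMod.natCast_eq_zero_iff] at this
    have := Nat.le_of_dvd (by norm_num) this
    omega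
  · intro h
    have : ((3 : ℕ) : ZMod p) = 0 := by exact_mod_cast h
    rw [ZMod.natCast_eq_zero_iff] at this
    have := Nat.le_of_dvd (by norm_num) this
    omega

/-- normalised left coefficients -/
noncomputable def a (p : ℕ) [Fact p.Prime] (k : ℕ) : ZMod p := (A k : ZMod p) / 108 ^ k
/-- normalised right coefficients -/
noncomputable def b (p : ℕ) [Fact p.Prime] (k : ℕ) : ZMod p := (B k : ZMod p) / 432 ^ k

lemma a_succ (hp : 3 < p) (k : ℕ) : 18 * (k + 1 : ZMod p) ^ 3 * a p (k + 1) =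
    (2 * k + 1) * (3 * k + 1) * (3 * k + 2) * a p k := by
  obtain ⟨h2, h3⟩ := small_ne hp
  have h108 : (108 : ZMod p) ≠ 0 := by
    rw [show (108 : ZMod p) = 2 ^ 2 * 3 ^ 3 by norm_num]; simp [h2, h3]
  have h := congrArg (Nat.cast : ℕ → ZMod p) (A_succ k)
  push_cast at h
  rw [a, a, pow_succ]
  field_simp
  linear_combination 18 * 108 ^ k * h

lemma b_succ (hp : 3 < p) (k : ℕ) : 18 * (k + 1 : ZMod p) ^ 3 * b p (k + 1) =
    (2 * k + 1) * (6 * k + 1) * (6 * k + 5) * b p k := by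
  obtain ⟨h2, h3⟩ := small_ne hp
  have h432 : (432 : ZMod p) ≠ 0 := by
    rw [show (432 : ZMod p) = 2 ^ 4 * 3 ^ 3 by norm_num]; simp [h2, h3]
  have h := congrArg (Nat.cast : ℕ → ZMod p) (B_succ k)
  push_cast at h
  rw [b, b, pow_succ]
  field_simp
  linear_combination 18 * 432 ^ k * h

/-- left polynomial -/
noncomputable def F (p : ℕ) [Fact p.Prime] (n : ℕ) : (ZMod p)[X] := ∑ k ∈ range (n + 1), C (a p k) * z p ^ k
/-- right polynomial -/
noncomputable def G (p : ℕ) [Fact p.Prime] (m n : ℕ) : (ZMod p)[X] := ∑ k ∈ range (n + 1), C (b p k) * T p m k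

lemma L_F (hp : 3 < p) (n : ℕ) : L (F p n) = 4 * X * s p ^ 3 *
    (C ((2 * n + 1) * (3 * n + 1) * (3 * n + 2) * a p n) * z p ^ (n + 1)) := by
  induction n with
  | zero =>
    have := L_z_pow (p := p) 0
    simp only [F, zero_add, sum_range_one, L_C_mul, this]
    simp only [map_mul, map_add, map_natCast, map_one, map_ofNat]
    push_cast; ring
  | succ n ih =>
    have h := congrArg (C : ZMod p → (ZMod p)[X]) (a_succ hp n)
    rw [F, sum_range_succ, ← F, L_add, ih, L_C_mul, L_z_pow, ← a_succ hp n]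
    simp only [map_mul, map_add, map_pow, map_natCast, map_one, map_ofNat]
    push_cast
    ring

lemma L_G (hp : 3 < p) {m : ℕ} (hm : (2 * m + 1 : (ZMod p)[X]) = 0) (n : ℕ) (hn : 3 * n ≤ m) :
    L (G p m n) = - 4 * (2 * X ^ 2 - 14 * X + 11) *
    (C ((2 * n + 1) * (6 * n + 1) * (6 * n + 5) * b p n) *
      ((1 - X) * (1 + X) ^ 3 * T p m n)) := by
  induction n with
  | zero =>
    have := L_T (p := p) hm hn
    simp only [G, zero_add, sum_range_one, L_C_mul, this]
    simp only [map_mul, map_add, map_natCast, map_one, map_ofNat]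
    push_cast; ring
  | succ n ih =>
    rw [G, sum_range_succ, ← G, L_add, ih (by omega), L_C_mul, L_T hm hn, ← b_succ hp n,
      ← T_succ hn]
    simp only [map_mul, map_add, map_pow, map_natCast, map_one, map_ofNat]
    push_cast
    ring

lemma uniq (hp : 3 < p) (H : (ZMod p)[X]) (hL : L H = 0) (h1 : H.eval 1 = 0)
    (hd : H.natDegree < p) : H = 0 := by
  by_contra hH
  obtain ⟨h2, h3⟩ := small_ne hp
  obtain ⟨U, hU, hdvd⟩ := exists_eq_pow_rootMultiplicity_mul_and_not_dvd H hH 1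
  have hU1 : U.eval 1 ≠ 0 := fun h => hdvd (dvd_iff_isRoot.mpr h)
  set n := rootMultiplicity 1 H with hn
  have hn0 : 0 < n := (rootMultiplicity_pos hH).mpr h1
  have hnp : n < p := lt_of_le_of_lt
    ((rootMultiplicity_le_rootMultiplicity_of_dvd hH dvd_rfl 1).trans
      (by rw [← count_roots]; exact (Multiset.count_le_card _ _).trans (card_roots' H))) hd
  have hnz : (n : ZMod p) ≠ 0 := by
    intro h
    rw [ZMod.natCast_eq_zero_iff] at h
    have := Nat.le_of_dvd hn0 h
    omega
  have hY : d (X - C 1 : (ZMod p)[X]) = (X - C 1) * (-(1 + X) * s p) := by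
    simp [d, z]; ring
  have key : ∀ W : (ZMod p)[X], d ((X - C 1) ^ n * W) =
      (X - C 1) ^ n * (((n : (ZMod p)[X]) * (-(1 + X) * s p)) * W + d W) := by
    intro W; rw [d_mul, d_pow hY]; ring
  have hev : ∀ W : (ZMod p)[X], (((n : (ZMod p)[X]) * (-(1 + X) * s p)) * W + d W).eval 1
      = -2 * n * W.eval 1 := by
    intro W; simp [d, z, s]; ring
  rw [hU] at hL
  simp only [L, key] at hL
  set D : (ZMod p)[X] → (ZMod p)[X] := fun W => ((n : (ZMod p)[X]) * (-(1 + X) * s p)) * W + d W with hD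
  have hev' : ∀ W, (D W).eval 1 = -2 * n * W.eval 1 := hev
  have hL2 : (X - C 1) ^ n * (9 * D (D (D U)) + 108 * z p * D (D U)
     - 8 * z p * (16 * X ^ 2 + 5 * X - 11) * D U + 8 * z p * X * s p ^ 3 * U) = 0 := by
    rw [← hL]; simp only [hD]; ring
  have hL3 := (mul_eq_zero.mp hL2).resolve_left (pow_ne_zero _ (X_sub_C_ne_zero 1))
  have hL4 := congrArg (eval 1) hL3
  have hz : (z p).eval 1 = 0 := by simp [z]
  simp only [eval_add, eval_sub, eval_mul, hz, hev', eval_zero, eval_ofNat] at hL4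
  have : (2 : ZMod p) ^ 3 * 3 ^ 2 * n ^ 3 * eval 1 U = 0 := by linear_combination -hL4
  simp [h2, h3, hnz, hU1] at this

lemma natDegree_z : (z p).natDegree ≤ 2 := by
  unfold z; compute_degree

lemma natDegree_s : (s p).natDegree ≤ 1 := by
  unfold s; compute_degree

lemma F_eq_G (hp : 3 < p) : F p ((p - 1) / 2) = G p ((p - 1) / 2) (p / 6) := by
  have hpr : p.Prime := Fact.out
  have hodd : p % 2 = 1 := hpr.eq_two_or_odd.resolve_left (by omega)
  have hp3 : p % 3 ≠ 0 := by
    intro h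
    have := (Nat.prime_dvd_prime_iff_eq Nat.prime_three hpr).mp (Nat.dvd_of_mod_eq_zero h)
    omega
  have hm0 : (2 * ((p - 1) / 2 : ℕ) + 1 : ZMod p) = 0 := by
    have : 2 * ((p - 1) / 2) + 1 = p := by omega
    have h := congrArg (Nat.cast : ℕ → ZMod p) this
    push_cast at h
    simpa using h
  have hm : (2 * ((p - 1) / 2 : ℕ) + 1 : (ZMod p)[X]) = 0 := by
    have := congrArg (C : ZMod p → (ZMod p)[X]) hm0
    simpa only [map_mul, map_add, map_natCast, map_one, map_ofNat, map_zero] using this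
  have h6 : (6 * (p / 6 : ℕ) + 1 : ZMod p) * (6 * (p / 6 : ℕ) + 5) = 0 := by
    rcases (by omega : 6 * (p / 6) + 1 = p ∨ 6 * (p / 6) + 5 = p) with h | h
    · have h := congrArg (Nat.cast : ℕ → ZMod p) h
      push_cast at h
      rw [h]; simp
    · have h := congrArg (Nat.cast : ℕ → ZMod p) h
      push_cast at h
      rw [h]; simp
  have hle : 3 * (p / 6) ≤ (p - 1) / 2 := by omega
  rw [← sub_eq_zero]
  apply uniq hp
  · rw [L_sub, L_F hp, L_G hp hm _ hle, hm0, mul_assoc (2 * ((p / 6 : ℕ) : ZMod p) + 1), h6]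
    simp
  · have hF : ∀ n, (F p n).eval 1 = 1 := by
      intro n
      rw [F, eval_finsetSum, sum_range_succ', sum_eq_zero]
      · simp [a, A]
      · intro k _; simp [z]
    have hG : ∀ m n, (G p m n).eval 1 = 1 := by
      intro m n
      rw [G, eval_finsetSum, sum_range_succ', sum_eq_zero]
      · simp [b, B, T, s]; norm_num
      · intro k _; simp [T]
    rw [eval_sub, hF, hG, sub_self]
  · have hFd : (F p ((p - 1) / 2)).natDegree ≤ p - 1 := by
      apply natDegree_sum_le_of_forall_le
      intro k hk
      rw [mem_range] at hk
      refine (natDegree_C_mul_le _ _).trans (natDegree_pow_le.trans ?_)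
      have := Nat.mul_le_mul_left k (natDegree_z (p := p))
      omega
    have hV : ((1 - X) * (1 + X) ^ 3 : (ZMod p)[X]).natDegree ≤ 4 := by compute_degree
    have hGd : (G p ((p - 1) / 2) (p / 6)).natDegree ≤ p - 1 := by
      apply natDegree_sum_le_of_forall_le
      intro k hk
      rw [mem_range] at hk
      refine (natDegree_C_mul_le _ _).trans (natDegree_mul_le.trans ?_)
      have h1 := (natDegree_pow_le (p := s p) (n := (p - 1) / 2 - 3 * k))
      have h2 := (natDegree_pow_le (p := ((1 - X) * (1 + X) ^ 3 : (ZMod p)[X])) (n := k))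
      have h3 := Nat.mul_le_mul_left k hV
      have h4 := Nat.mul_le_mul_left ((p - 1) / 2 - 3 * k) (natDegree_s (p := p))
      omega
    have := natDegree_sub_le_of_le hFd hGd
    simp only [max_self] at this
    omega

lemma main (hp : 3 < p) (t : ℤ) (h1 : (5 - 4 * t : ZMod p) ≠ 0) :
    (∑ k ∈ Finset.range ((p - 1) / 2 + 1),
        (Nat.choose (2 * k) k : ZMod p) ^ 2 * (Nat.choose (3 * k) k : ZMod p) *
          ((1 - (t : ZMod p) ^ 2) / 108) ^ k)
      = ((legendreSym p (5 - 4 * t) : ℤ) : ZMod p) *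
          ∑ k ∈ Finset.range (p / 6 + 1),
            (Nat.choose (2 * k) k : ZMod p) * (Nat.choose (3 * k) k : ZMod p) *
              (Nat.choose (6 * k) (3 * k) : ZMod p) *
              (((t : ZMod p) - 1) * ((t : ZMod p) + 1) ^ 3 /
                (432 * (4 * (t : ZMod p) - 5) ^ 3)) ^ k := by
  have h := congrArg (eval (t : ZMod p)) (F_eq_G hp)
  rw [F, G, eval_finsetSum, eval_finsetSum] at h
  have hpr : p.Prime := Fact.out
  have hodd : p % 2 = 1 := hpr.eq_two_or_odd.resolve_left (by omega)
  have h12 : (p - 1) / 2 = p / 2 := by omega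
  rw [legendreSym.eq_pow, mul_sum]
  refine Eq.trans (sum_congr rfl ?_) (h.trans (sum_congr rfl ?_))
  · intro k _
    simp only [a, A, z, eval_mul, eval_C, eval_pow, eval_add, eval_sub, eval_one, eval_X]
    push_cast
    rw [div_pow, show (1 - (t : ZMod p) ^ 2) = (1 - t) * (1 + t) by ring]
    ring
  · intro k hk
    rw [mem_range] at hk
    simp only [b, B, T, s, eval_mul, eval_C, eval_pow, eval_add, eval_sub, eval_one, eval_X,
      eval_ofNat]
    push_cast
    have hs : (5 - 4 * t : ZMod p) ^ (p / 2) =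
        (5 - 4 * t : ZMod p) ^ ((p - 1) / 2 - 3 * k) * ((5 - 4 * t : ZMod p) ^ 3) ^ k := by
      rw [← pow_mul, ← pow_add]; congr 1; omega
    have hr : ((t : ZMod p) - 1) * ((t : ZMod p) + 1) ^ 3 / (432 * (4 * (t : ZMod p) - 5) ^ 3)
        = ((1 - t) * (1 + t) ^ 3) / (5 - 4 * t : ZMod p) ^ 3 / 432 := by
      rw [div_div, ← neg_div_neg_eq]; congr 1 <;> ring
    rw [hs, hr, div_pow, div_pow]
    have h3 : ((5 - 4 * t : ZMod p) ^ 3) ^ k ≠ 0 := pow_ne_zero _ (pow_ne_zero _ h1)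
    field_simp

end Aux

theorem stmt_1 (p : ℕ) [Fact p.Prime] (hp : 3 < p) (t : ℤ)
    (h1 : ¬ (4 * t ≡ 5 [ZMOD (p : ℤ)])) (h2 : ¬ (4 * t ≡ -5 [ZMOD (p : ℤ)])) :
    (∑ k ∈ Finset.range ((p - 1) / 2 + 1),
        (Nat.choose (2 * k) k : ZMod p) ^ 2 * (Nat.choose (3 * k) k : ZMod p) *
          ((1 - (t : ZMod p) ^ 2) / 108) ^ k)
      = ((legendreSym p (5 - 4 * t) : ℤ) : ZMod p) *
          ∑ k ∈ Finset.range (p / 6 + 1),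
            (Nat.choose (2 * k) k : ZMod p) * (Nat.choose (3 * k) k : ZMod p) *
              (Nat.choose (6 * k) (3 * k) : ZMod p) *
              (((t : ZMod p) - 1) * ((t : ZMod p) + 1) ^ 3 /
                (432 * (4 * (t : ZMod p) - 5) ^ 3)) ^ k
    ∧
    (∑ k ∈ Finset.range ((p - 1) / 2 + 1),
        (Nat.choose (2 * k) k : ZMod p) ^ 2 * (Nat.choose (3 * k) k : ZMod p) *
          ((1 - (t : ZMod p) ^ 2) / 108) ^ k)
      = ((legendreSym p (5 + 4 * t) : ℤ) : ZMod p) *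
          ∑ k ∈ Finset.range (p / 6 + 1),
            (Nat.choose (2 * k) k : ZMod p) * (Nat.choose (3 * k) k : ZMod p) *
              (Nat.choose (6 * k) (3 * k) : ZMod p) *
              (((t : ZMod p) + 1) * (1 - (t : ZMod p)) ^ 3 /
                (432 * (4 * (t : ZMod p) + 5) ^ 3)) ^ k := by
  have e1 : (5 - 4 * t : ZMod p) ≠ 0 := by
    intro h
    apply h1
    rw [← ZMod.intCast_eq_intCast_iff]
    push_cast
    linear_combination -h
  have e2 : (5 - 4 * (-t : ℤ) : ZMod p) ≠ 0 := by
    intro h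
    apply h2
    rw [← ZMod.intCast_eq_intCast_iff]
    push_cast at h ⊢
    linear_combination h
  refine ⟨Aux.main hp t e1, ?_⟩
  have h := Aux.main hp (-t) e2
  rw [show (5 - 4 * -t : ℤ) = 5 + 4 * t by ring] at h
  push_cast at h
  rw [neg_sq] at h
  rw [h]
  congr 1
  refine sum_congr rfl fun k _ => ?_
  congr 2
  rw [← neg_div_neg_eq]
  congr 1 <;> ring
end

section
/- Let p > 3 be a prime and let t be an integer with 3t ≢ 5 (mod p) and 3t ≢ -5 (mod p). Then Σ_{k=0}^{(p-1)/2} C(2k,k)^2·C(4k,2k) · ((1-t^2)/256)^k ≡ (10+6t | p) · Σ_{k=0}^{⌊p/6⌋} C(2k,k)·C(3k,k)·C(6k,3k) · ((t-1)^2(t+1)/(64(3t+5)^3))^k ≡ (10-6t | p) · Σ_{k=0}^{⌊p/6⌋} C(2k,k)·C(3k,k)·C(6k,3k) · ((t+1)^2(t-1)/(64(3t-5)^3))^k (mod p). -/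
open Finset

namespace SunAux

open Polynomial

variable {F : Type*} [Field F]

/-- Euler operator. -/
noncomputable def th : F[X] →ₗ[F] F[X] :=
  (LinearMap.mulLeft F (X : F[X])) ∘ₗ Polynomial.derivative

theorem th_apply (f : F[X]) : th f = X * derivative f := rfl

theorem th_mul (f g : F[X]) : th (f * g) = th f * g + f * th g := by
  simp only [th_apply, derivative_mul]; ring

theorem coeff_th (f : F[X]) (n : ℕ) : (th f).coeff n = n * f.coeff n := by
  rw [th_apply]
  cases n with
  | zero => simp
  | succ m => rw [coeff_X_mul, coeff_derivative]; push_cast; ring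

/-- The third order operator. -/
noncomputable def Lop : F[X] →ₗ[F] F[X] :=
  (LinearMap.mulLeft F (4 * (X + 2) ^ 2 : F[X])) ∘ₗ th ∘ₗ th ∘ₗ th
  + (LinearMap.mulLeft F (12 * X * (X + 2) : F[X])) ∘ₗ th ∘ₗ th
  + (LinearMap.mulLeft F (X * (11 * X + 14) : F[X])) ∘ₗ th
  + (LinearMap.mulLeft F (3 * X * (X + 1) : F[X]))

theorem Lop_apply (f : F[X]) : Lop f = 4 * (X + 2) ^ 2 * th (th (th f))
  + 12 * X * (X + 2) * th (th f) + X * (11 * X + 14) * th f + 3 * X * (X + 1) * f := rfl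

theorem X_pow_dvd_th {n : ℕ} {f : F[X]} (h : X ^ n ∣ f) : X ^ n ∣ th f := by
  rw [X_pow_dvd_iff] at h ⊢
  intro d hd
  rw [coeff_th, h d hd, mul_zero]

theorem uniq (p : ℕ) [Fact p.Prime] [CharP F p] (hp : 3 < p) (E : F[X]) (hL : Lop E = 0)
    (h0 : E.coeff 0 = 0) (hdeg : E.natDegree < p) : E = 0 := by
  have key : ∀ n, n < p → X ^ (n + 1) ∣ E := by
    intro n
    induction n with
    | zero => intro _; rw [zero_add, pow_one]; exact X_dvd_iff.mpr h0
    | succ n ih =>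
      intro hn
      have hd := ih (by omega)
      have d1 := X_pow_dvd_th hd
      have d2 := X_pow_dvd_th d1
      have d3 := X_pow_dvd_th d2
      rw [Lop_apply] at hL
      have e : (16 : F[X]) * th (th (th E)) = X * (-(4 * (X + 4)) * th (th (th E))
         - 12 * (X + 2) * th (th E) - (11 * X + 14) * th E - 3 * (X + 1) * E) := by
        linear_combination hL
      have d4 : X ^ (n + 1 + 1) ∣ (16 : F[X]) * th (th (th E)) := by
        rw [e, pow_succ' X (n + 1)]
        apply mul_dvd_mul_left
        exact dvd_sub (dvd_sub (dvd_sub (d3.mul_left _) (d2.mul_left _)) (d1.mul_left _))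
          (hd.mul_left _)
      rw [X_pow_dvd_iff] at d4 hd ⊢
      intro d hd'
      rcases Nat.lt_succ_iff_lt_or_eq.mp hd' with h | h
      · exact hd d h
      · subst h
        have := d4 (n + 1) (by omega)
        rw [show (16 : F[X]) = C 16 from (map_ofNat C 16).symm, coeff_C_mul, coeff_th, coeff_th, coeff_th] at this
        have hne : ((n + 1 : ℕ) : F) ≠ 0 := by
          rw [Ne, CharP.cast_eq_zero_iff F p]
          intro hdvd
          exact absurd (Nat.le_of_dvd (by omega) hdvd) (by omega)
        have h16 : (16 : F) ≠ 0 := by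
          have : ((2 : ℕ) : F) ≠ 0 := by
            rw [Ne, CharP.cast_eq_zero_iff F p]
            intro hdvd
            exact absurd (Nat.le_of_dvd (by omega) hdvd) (by omega)
          have h2 : (2 : F) ≠ 0 := by exact_mod_cast this
          rw [show (16 : F) = 2 ^ 4 by norm_num]
          exact pow_ne_zero _ h2
        simpa [hne, h16, -Nat.cast_add] using this
  ext n
  by_cases hn : n < p
  · exact (X_pow_dvd_iff.mp (key n hn)) n (by omega)
  · rw [coeff_zero]; exact coeff_eq_zero_of_natDegree_lt (by omega)

theorem Lop_of_eigen (T W q : F[X]) (h : W * th T = q * T) :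
    W ^ 3 * Lop T = T * (
      4 * (X + 2) ^ 2 * ((q - 2 * th W) * (W * th q + q ^ 2 - q * th W)
        + W * th (W * th q + q ^ 2 - q * th W))
      + 12 * X * (X + 2) * W * (W * th q + q ^ 2 - q * th W)
      + X * (11 * X + 14) * W ^ 2 * q + 3 * X * (X + 1) * W ^ 3) := by
  have a1 : th W * th T + W * th (th T) = th q * T + q * th T := by
    rw [← th_mul, ← th_mul, h]
  have a2 : W * (W * th (th T)) = (W * th q + q ^ 2 - q * th W) * T := by
    linear_combination W * a1 + (q - th W) * h
  have a3 := congrArg th a2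
  set q2 := W * th q + q ^ 2 - q * th W with hq2
  rw [th_mul, th_mul W, th_mul q2] at a3
  rw [Lop_apply]
  have a4 : W ^ 3 * th (th (th T)) = T * ((q - 2 * th W) * q2 + W * th q2) := by
    linear_combination W * a3 - 2 * th W * a2 + q2 * h
  linear_combination (4 * (X + 2) ^ 2) * a4 + 12 * X * (X + 2) * W * a2
    + X * (11 * X + 14) * W ^ 2 * h

theorem th_X : th (X : F[X]) = X := by simp [th_apply]
theorem th_nat (n : ℕ) : th (n : F[X]) = 0 := by simp [th_apply]
theorem th_ofNat (n : ℕ) [n.AtLeastTwo] : th (OfNat.ofNat n : F[X]) = 0 := by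
  simp [th_apply]
theorem th_two : th (2 : F[X]) = 0 := th_ofNat 2
theorem th_three : th (3 : F[X]) = 0 := th_ofNat 3
theorem th_four : th (4 : F[X]) = 0 := th_ofNat 4
theorem th_eight : th (8 : F[X]) = 0 := th_ofNat 8
theorem th_nine : th (9 : F[X]) = 0 := th_ofNat 9
theorem th_sixteen : th (16 : F[X]) = 0 := th_ofNat 16
theorem th_one : th (1 : F[X]) = 0 := by simp [th_apply]

theorem th_pow (f : F[X]) (n : ℕ) : f * th (f ^ n) = n * th f * f ^ n := by
  cases n with
  | zero => simp [th_apply]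
  | succ n => 
    simp only [th_apply, derivative_pow_succ]
    simp
    ring

theorem th_sq (f : F[X]) : th (f ^ 2) = 2 * f * th f := by
  rw [pow_two, th_mul]; ring

theorem Lop_S (k : ℕ) : ((X : F[X]) + 2) ^ 3 * Lop ((-(X * (X + 2))) ^ k) =
    (X + 2) ^ 2 * (X + 1) * (32 * (k : F[X]) ^ 3 * (-(X * (X + 2))) ^ k
      - (2 * (k : F[X]) + 1) * (4 * (k : F[X]) + 1) * (4 * (k : F[X]) + 3) *
        (-(X * (X + 2))) ^ (k + 1)) := by
  have h : ((X : F[X]) + 2) * th ((-(X * (X + 2))) ^ k) =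
      ((k : F[X]) * (2 * X + 2)) * (-(X * (X + 2))) ^ k := by
    have := th_pow (-((X : F[X]) * (X + 2))) k
    rw [map_neg, th_mul, map_add, th_X, th_ofNat] at this
    apply mul_left_cancel₀ (X_ne_zero (R := F))
    linear_combination -this
  rw [Lop_of_eigen _ _ _ h]
  simp only [map_add, map_sub, th_mul, th_sq, th_X, th_nat, map_zero, th_two, th_three, th_four, th_eight,
    th_nine, th_sixteen]
  ring

theorem Lop_T (h k : ℕ) (hk : 3 * k ≤ h) (hh : 2 * (h : F) + 1 = 0) :
    (((X : F[X]) + 2) * (3 * X + 8)) ^ 3 *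
      Lop ((X ^ 2 * (X + 2)) ^ k * (3 * X + 8) ^ (h - 3 * k)) =
    2 * (X + 2) ^ 2 * (9 * X + 16) * (8 * (k : F[X]) ^ 3 * (3 * X + 8) ^ 3
      - 3 * ((2 * (k : F[X]) + 1) * (6 * (k : F[X]) + 1) * (6 * (k : F[X]) + 5)) *
        (X ^ 2 * (X + 2))) *
      ((X ^ 2 * (X + 2)) ^ k * (3 * X + 8) ^ (h - 3 * k)) := by
  have hh' : 2 * (h : F[X]) + 1 = 0 := by
    have := congrArg C hh
    simpa [map_ofNat C] using this
  have e : (2 * (((X : F[X]) + 2) * (3 * X + 8))) *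
      th ((X ^ 2 * (X + 2)) ^ k * (3 * X + 8) ^ (h - 3 * k))
      = (4 * (k : F[X]) * (9 * X + 16) - 3 * X * (X + 2))
        * ((X ^ 2 * (X + 2)) ^ k * (3 * X + 8) ^ (h - 3 * k)) := by
    have e1 := th_pow ((X : F[X]) ^ 2 * (X + 2)) k
    have e2 := th_pow (3 * (X : F[X]) + 8) (h - 3 * k)
    have e3 : (((h - 3 * k : ℕ)) : F[X]) = (h : F[X]) - 3 * (k : F[X]) := by
      rw [Nat.cast_sub hk]; push_cast; ring
    rw [e3] at e2
    simp only [th_mul, th_sq, map_add, th_X, th_two, th_three, th_eight] at e1 e2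
    rw [th_mul]
    apply mul_left_cancel₀ (pow_ne_zero 2 (X_ne_zero (R := F)))
    linear_combination 2 * (3 * X + 8) * (3 * X + 8) ^ (h - 3 * k) * e1
      + 2 * X ^ 2 * (X + 2) * (X ^ 2 * (X + 2)) ^ k * e2
      + 3 * X ^ 3 * (X + 2) * ((X ^ 2 * (X + 2)) ^ k * (3 * X + 8) ^ (h - 3 * k)) * hh'
  have e4 := Lop_of_eigen _ _ _ e
  simp only [map_add, map_sub, th_mul, th_sq, th_X, th_nat, map_zero, th_two, th_three, th_four, th_eight,
    th_nine, th_sixteen] at e4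
  generalize (X ^ 2 * (X + 2)) ^ k * (3 * (X : F[X]) + 8) ^ (h - 3 * k) = T at *
  have h8 : (8 : F[X]) ≠ 0 := by
    intro h8
    have : (2 : F[X]) ^ 3 = 0 := by rw [← h8]; norm_num
    have h2 : (2 : F[X]) = 0 := by simpa using this
    rw [h2, zero_mul, zero_add] at hh'; exact one_ne_zero hh'
  apply mul_left_cancel₀ h8
  linear_combination e4

theorem recA (k : ℕ) : (k + 1) ^ 3 * (Nat.choose (2 * (k + 1)) (k + 1) ^ 2 *
    Nat.choose (4 * (k + 1)) (2 * (k + 1))) =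
    8 * ((2 * k + 1) * (4 * k + 1) * (4 * k + 3)) *
      (Nat.choose (2 * k) k ^ 2 * Nat.choose (4 * k) (2 * k)) := by
  have h1 := Nat.succ_mul_centralBinom_succ k
  have h2 := Nat.succ_mul_centralBinom_succ (2 * k)
  have h3 := Nat.succ_mul_centralBinom_succ (2 * k + 1)
  rw [show 4 * (k + 1) = 2 * (2 * (k + 1)) by ring, show 4 * k = 2 * (2 * k) by ring]
  simp only [← Nat.centralBinom_eq_two_mul_choose]
  rw [show 2 * k + 1 + 1 = 2 * (k + 1) by ring] at h3
  generalize Nat.centralBinom (2 * (k + 1)) = c2 at *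
  generalize Nat.centralBinom (2 * k + 1) = c1 at *
  generalize Nat.centralBinom (2 * k) = c0 at *
  generalize Nat.centralBinom (k + 1) = d1 at *
  generalize Nat.centralBinom k = d0 at *
  have hpos : (0 : ℤ) < 2 * (2 * k + 1) := by positivity
  zify at *
  have h4 : (2 * (2 * k + 1) : ℤ) * ((k + 1) * c2) =
      2 * (2 * k + 1) * (0 : ℤ) + 4 * (4 * k + 1) * (4 * k + 3) * c0 := by
    linear_combination (2 * k + 1 : ℤ) * h3 + 2 * (4 * k + 3 : ℤ) * h2
  apply mul_left_cancel₀ hpos.ne'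
  linear_combination ((k + 1) ^ 2 * d1 ^ 2 : ℤ) * h4
    + (4 * (4 * k + 1) * (4 * k + 3) * c0 : ℤ) * ((k + 1) * d1 + 2 * (2 * k + 1) * d0) * h1

theorem factB (k : ℕ) : (Nat.choose (2 * k) k * Nat.choose (3 * k) k * Nat.choose (6 * k) (3 * k))
    * (Nat.factorial (3 * k) * Nat.factorial k ^ 3) = Nat.factorial (6 * k) := by
  have h1 := Nat.choose_mul_factorial_mul_factorial (show k ≤ 2 * k by omega)
  have h2 := Nat.choose_mul_factorial_mul_factorial (show k ≤ 3 * k by omega)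
  have h3 := Nat.choose_mul_factorial_mul_factorial (show 3 * k ≤ 6 * k by omega)
  rw [show 2 * k - k = k by omega] at h1
  rw [show 3 * k - k = 2 * k by omega] at h2
  rw [show 6 * k - 3 * k = 3 * k by omega] at h3
  rw [← h3]
  conv_rhs => rw [← h2, ← h1]
  conv_lhs => rw [← h2, ← h1]
  ring

theorem recB (k : ℕ) : (k + 1) ^ 3 * (Nat.choose (2 * (k + 1)) (k + 1) *
    Nat.choose (3 * (k + 1)) (k + 1) * Nat.choose (6 * (k + 1)) (3 * (k + 1))) =
    24 * ((2 * k + 1) * (6 * k + 1) * (6 * k + 5)) *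
      (Nat.choose (2 * k) k * Nat.choose (3 * k) k * Nat.choose (6 * k) (3 * k)) := by
  have h0 := factB k
  have h1 := factB (k + 1)
  generalize Nat.choose (2 * (k + 1)) (k + 1) *
    Nat.choose (3 * (k + 1)) (k + 1) * Nat.choose (6 * (k + 1)) (3 * (k + 1)) = b1 at *
  generalize Nat.choose (2 * k) k * Nat.choose (3 * k) k * Nat.choose (6 * k) (3 * k) = b0 at *
  rw [show 3 * (k + 1) = 3 * k + 1 + 1 + 1 by ring,
    show 6 * (k + 1) = 6 * k + 1 + 1 + 1 + 1 + 1 + 1 by ring] at h1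
  simp only [Nat.factorial_succ] at h1
  rw [← h0] at h1
  have hp1 : 0 < (3 * k + 1) * (3 * k + 2) * (3 * k + 3) *
    (Nat.factorial (3 * k) * Nat.factorial k ^ 3) := by positivity
  apply Nat.eq_of_mul_eq_mul_left hp1
  linear_combination h1

theorem Lop_C_mul (c : F) (f : F[X]) : Lop (C c * f) = C c * Lop f := by
  rw [← smul_eq_C_mul, map_smul, smul_eq_C_mul]

theorem X_add_ne (c : F) : (X : F[X]) + C c ≠ 0 := X_add_C_ne_zero c

theorem Lop_A (α : ℕ → F) (hα : ∀ k : ℕ, 32 * ((k : F) + 1) ^ 3 * α (k + 1) =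
      ((2 * (k : F) + 1) * (4 * (k : F) + 1) * (4 * (k : F) + 3)) * α k) (h : ℕ)
      (hh : 2 * (h : F) + 1 = 0) :
    Lop (∑ k ∈ range (h + 1), C (α k) * (-((X : F[X]) * (X + 2))) ^ k) = 0 := by
  have key : ∀ n : ℕ, ((X : F[X]) + 2) ^ 3 *
      Lop (∑ k ∈ range (n + 1), C (α k) * (-((X : F[X]) * (X + 2))) ^ k) =
      -((X + 2) ^ 2 * (X + 1) * ((2 * (n : F[X]) + 1) * (4 * (n : F[X]) + 1) * (4 * (n : F[X]) + 3)
        * C (α n)) * (-((X : F[X]) * (X + 2))) ^ (n + 1)) := by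
    intro n
    induction n with
    | zero =>
      rw [zero_add, sum_range_one, Lop_C_mul]
      have := Lop_S (F := F) 0
      linear_combination C (α 0) * this
    | succ n ih =>
      rw [sum_range_succ, map_add, mul_add, ih, Lop_C_mul]
      have := Lop_S (F := F) (n + 1)
      have hr := congrArg C (hα n)
      simp only [map_mul, map_add, map_pow, map_ofNat C, map_natCast C, map_one] at hr
      push_cast at this ⊢
      linear_combination C (α (n + 1)) * this + (X + 2) ^ 2 * (X + 1) *
        (-((X : F[X]) * (X + 2))) ^ (n + 1) * hr
  have hh' : 2 * (h : F[X]) + 1 = 0 := by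
    have := congrArg C hh
    simpa [map_ofNat C] using this
  have hk := key h
  rw [hh'] at hk
  have hne : ((X : F[X]) + 2) ^ 3 ≠ 0 := by
    have := X_add_ne (2 : F)
    rw [map_ofNat C] at this
    exact pow_ne_zero _ this
  apply (mul_eq_zero.mp (hk.trans _)).resolve_left hne
  ring

theorem Lop_B (β : ℕ → F) (hβ : ∀ k : ℕ, 8 * ((k : F) + 1) ^ 3 * β (k + 1) =
      3 * ((2 * (k : F) + 1) * (6 * (k : F) + 1) * (6 * (k : F) + 5)) * β k) (h N : ℕ)
      (hN : 3 * N ≤ h) (hh : 2 * (h : F) + 1 = 0) (h8 : (8 : F) ≠ 0)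
      (hN0 : (6 * (N : F) + 1) * (6 * (N : F) + 5) = 0) :
    Lop (∑ k ∈ range (N + 1), C (β k) *
      (((X : F[X]) ^ 2 * (X + 2)) ^ k * (3 * X + 8) ^ (h - 3 * k))) = 0 := by
  have key : ∀ n : ℕ, n ≤ N → (((X : F[X]) + 2) * (3 * X + 8)) ^ 3 *
      Lop (∑ k ∈ range (n + 1), C (β k) *
      (((X : F[X]) ^ 2 * (X + 2)) ^ k * (3 * X + 8) ^ (h - 3 * k))) =
      -(2 * (X + 2) ^ 2 * (9 * X + 16) *
        (3 * ((2 * (n : F[X]) + 1) * ((6 * (n : F[X]) + 1) * (6 * (n : F[X]) + 5)))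
        * C (β n)) * (X ^ 2 * (X + 2)) *
        (((X : F[X]) ^ 2 * (X + 2)) ^ n * (3 * X + 8) ^ (h - 3 * n))) := by
    intro n
    induction n with
    | zero =>
      intro _
      rw [zero_add, sum_range_one, Lop_C_mul]
      have := Lop_T (F := F) h 0 (by omega) hh
      push_cast at this ⊢
      linear_combination C (β 0) * this
    | succ n ih =>
      intro hn
      rw [sum_range_succ, map_add, mul_add, ih (by omega), Lop_C_mul]
      have := Lop_T (F := F) h (n + 1) (by omega) hh
      have hr := congrArg C (hβ n)
      simp only [map_mul, map_add, map_pow, map_ofNat C, map_natCast C, map_one] at hr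
      rw [show h - 3 * n = h - 3 * (n + 1) + 3 by omega]
      push_cast at this ⊢
      linear_combination C (β (n + 1)) * this + 2 * (X + 2) ^ 2 * (9 * X + 16) * (3 * X + 8) ^ 3 *
        (((X : F[X]) ^ 2 * (X + 2)) ^ (n + 1) * (3 * X + 8) ^ (h - 3 * (n + 1))) * hr
  have hN0' : (6 * (N : F[X]) + 1) * (6 * (N : F[X]) + 5) = 0 := by
    have := congrArg C hN0
    simp only [map_mul, map_add, map_ofNat C, map_natCast C, map_one, map_zero] at this
    exact this
  have hk := key N le_rfl
  rw [hN0'] at hk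
  have hne : (((X : F[X]) + 2) * (3 * X + 8)) ^ 3 ≠ 0 := by
    have := X_add_ne (2 : F)
    rw [map_ofNat C] at this
    refine pow_ne_zero _ (mul_ne_zero this ?_)
    intro h0
    have := congrArg (eval 0) h0
    simp at this
    exact h8 this
  apply (mul_eq_zero.mp (hk.trans _)).resolve_left hne
  ring

theorem natDegree_A (α : ℕ → F) (h : ℕ) :
    (∑ k ∈ range (h + 1), C (α k) * (-((X : F[X]) * (X + 2))) ^ k).natDegree ≤ 2 * h := by
  apply natDegree_sum_le_of_forall_le
  intro k hk
  have hk' : k ≤ h := by simpa [Nat.lt_succ_iff] using hk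
  have : (-((X : F[X]) * (X + 2))).natDegree ≤ 2 := by compute_degree
  refine (natDegree_C_mul_le _ _).trans ((natDegree_pow_le_of_le k this).trans ?_)
  omega

theorem natDegree_B (β : ℕ → F) (h N : ℕ) (hN : 3 * N ≤ h) :
    (∑ k ∈ range (N + 1), C (β k) *
      (((X : F[X]) ^ 2 * (X + 2)) ^ k * (3 * X + 8) ^ (h - 3 * k))).natDegree ≤ h := by
  apply natDegree_sum_le_of_forall_le
  intro k hk
  have hk' : k ≤ N := by simpa [Nat.lt_succ_iff] using hk
  have h1 : ((X : F[X]) ^ 2 * (X + 2)).natDegree ≤ 3 := by compute_degree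
  have h2 : (3 * (X : F[X]) + 8).natDegree ≤ 1 := by compute_degree
  refine (natDegree_C_mul_le _ _).trans ((natDegree_mul_le_of_le (natDegree_pow_le_of_le k h1)
    (natDegree_pow_le_of_le _ h2)).trans ?_)
  omega

theorem main (p : ℕ) [Fact p.Prime] (hp : 3 < p) (t : ℤ)
    (h2 : ¬ (3 * t ≡ -5 [ZMOD (p : ℤ)])) :
    (∑ k ∈ Finset.range ((p - 1) / 2 + 1),
        (Nat.choose (2 * k) k : ZMod p) ^ 2 * (Nat.choose (4 * k) (2 * k) : ZMod p) *
          ((1 - (t : ZMod p) ^ 2) / 256) ^ k)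
      = ((legendreSym p (10 + 6 * t) : ℤ) : ZMod p) *
          ∑ k ∈ Finset.range (p / 6 + 1),
            (Nat.choose (2 * k) k : ZMod p) * (Nat.choose (3 * k) k : ZMod p) *
              (Nat.choose (6 * k) (3 * k) : ZMod p) *
              (((t : ZMod p) - 1) ^ 2 * ((t : ZMod p) + 1) /
                (64 * (3 * (t : ZMod p) + 5) ^ 3)) ^ k := by
  have hprime : p.Prime := Fact.out
  have hodd : p % 2 = 1 := by
    rcases hprime.eq_two_or_odd with h | h
    · omega
    · exact h
  have h3 : p % 3 ≠ 0 := by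
    intro h
    have := (Nat.prime_dvd_prime_iff_eq Nat.prime_three hprime).mp (Nat.dvd_of_mod_eq_zero h)
    omega
  obtain ⟨h, hh⟩ : ∃ h, h = p / 2 := ⟨_, rfl⟩
  obtain ⟨N, hN⟩ : ∃ N, N = p / 6 := ⟨_, rfl⟩
  have hph : p = 2 * h + 1 := by omega
  have hNh : 3 * N ≤ h := by omega
  have hhF : 2 * (h : ZMod p) + 1 = 0 := by
    have : ((2 * h + 1 : ℕ) : ZMod p) = 0 := by rw [← hph]; exact ZMod.natCast_self p
    exact_mod_cast this
  have hNF : (6 * (N : ZMod p) + 1) * (6 * (N : ZMod p) + 5) = 0 := by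
    have : p = 6 * N + 1 ∨ p = 6 * N + 5 := by omega
    rcases this with h | h
    · have : ((6 * N + 1 : ℕ) : ZMod p) = 0 := by rw [← h]; exact ZMod.natCast_self p
      push_cast at this
      rw [this, zero_mul]
    · have : ((6 * N + 5 : ℕ) : ZMod p) = 0 := by rw [← h]; exact ZMod.natCast_self p
      push_cast at this
      rw [this, mul_zero]
  have h2F : (2 : ZMod p) ≠ 0 := by
    intro h2
    rw [h2, zero_mul, zero_add] at hhF
    exact one_ne_zero hhF
  have h8F : (8 : ZMod p) ≠ 0 := by
    rw [show (8 : ZMod p) = 2 ^ 3 by norm_num]; exact pow_ne_zero _ h2F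
  have h64F : (64 : ZMod p) ≠ 0 := by
    rw [show (64 : ZMod p) = 2 ^ 6 by norm_num]; exact pow_ne_zero _ h2F
  have h256F : (256 : ZMod p) ≠ 0 := by
    rw [show (256 : ZMod p) = 2 ^ 8 by norm_num]; exact pow_ne_zero _ h2F
  have htF : 3 * (t : ZMod p) + 5 ≠ 0 := by
    intro h0
    apply h2
    rw [← ZMod.intCast_eq_intCast_iff]
    push_cast
    linear_combination h0
  let a : ℕ → ZMod p := fun k =>
    (Nat.choose (2 * k) k : ZMod p) ^ 2 * (Nat.choose (4 * k) (2 * k) : ZMod p)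
  let b : ℕ → ZMod p := fun k => (Nat.choose (2 * k) k : ZMod p) * (Nat.choose (3 * k) k : ZMod p) *
              (Nat.choose (6 * k) (3 * k) : ZMod p)
  let α : ℕ → ZMod p := fun k => a k / 256 ^ k
  let β : ℕ → ZMod p := fun k => b k / 64 ^ k
  have hα : ∀ k : ℕ, 32 * ((k : ZMod p) + 1) ^ 3 * α (k + 1) =
      ((2 * (k : ZMod p) + 1) * (4 * (k : ZMod p) + 1) * (4 * (k : ZMod p) + 3)) * α k := by
    intro k
    have := congrArg (Nat.cast : ℕ → ZMod p) (recA k)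
    push_cast at this
    have h' : ((k : ZMod p) + 1) ^ 3 * a (k + 1) = 8 * ((2 * (k : ZMod p) + 1) *
      (4 * (k : ZMod p) + 1) * (4 * (k : ZMod p) + 3)) * a k := this
    simp only [α]
    rw [← mul_div_assoc, ← mul_div_assoc, div_eq_div_iff (pow_ne_zero _ h256F)
      (pow_ne_zero _ h256F)]
    linear_combination 32 * 256 ^ k * h'
  have hβ : ∀ k : ℕ, 8 * ((k : ZMod p) + 1) ^ 3 * β (k + 1) =
      3 * ((2 * (k : ZMod p) + 1) * (6 * (k : ZMod p) + 1) * (6 * (k : ZMod p) + 5)) * β k := by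
    intro k
    have := congrArg (Nat.cast : ℕ → ZMod p) (recB k)
    push_cast at this
    have h' : ((k : ZMod p) + 1) ^ 3 * b (k + 1) = 24 * ((2 * (k : ZMod p) + 1) *
      (6 * (k : ZMod p) + 1) * (6 * (k : ZMod p) + 5)) * b k := this
    simp only [β]
    rw [← mul_div_assoc, ← mul_div_assoc, div_eq_div_iff (pow_ne_zero _ h64F)
      (pow_ne_zero _ h64F)]
    linear_combination 8 * 64 ^ k * h'
  have hA := Lop_A α hα h hhF
  have hB := Lop_B β hβ h N hNh hhF h8F hNF
  have dA := natDegree_A α h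
  have dB := natDegree_B β h N hNh
  have eA : ∀ x : ZMod p, eval x (∑ k ∈ range (h + 1), C (α k) * (-((X : (ZMod p)[X]) * (X + 2))) ^ k)
      = ∑ k ∈ range (h + 1), α k * (-(x * (x + 2))) ^ k := by
    intro x
    simp [eval_finsetSum]
  have eB : ∀ x : ZMod p, eval x (∑ k ∈ range (N + 1), C (β k) *
      (((X : (ZMod p)[X]) ^ 2 * (X + 2)) ^ k * (3 * X + 8) ^ (h - 3 * k)))
      = ∑ k ∈ range (N + 1), β k * ((x ^ 2 * (x + 2)) ^ k * (3 * x + 8) ^ (h - 3 * k)) := by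
    intro x
    simp [eval_finsetSum]
  generalize (∑ k ∈ range (h + 1), C (α k) * (-((X : (ZMod p)[X]) * (X + 2))) ^ k) = A at *
  generalize (∑ k ∈ range (N + 1), C (β k) *
      (((X : (ZMod p)[X]) ^ 2 * (X + 2)) ^ k * (3 * X + 8) ^ (h - 3 * k))) = B at *
  have hα0 : α 0 = 1 := by simp [α, a]
  have hβ0 : β 0 = 1 := by simp [β, b]
  have h16 : (2 : ZMod p) ^ h * 8 ^ h = 1 := by
    rw [← mul_pow, show (2 * 8 : ZMod p) = (2 ^ 2) ^ 2 by norm_num, ← pow_mul, ← pow_mul,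
      show 2 * (2 * h) = (p - 1) * 2 by omega, pow_mul, ZMod.pow_card_sub_one_eq_one h2F, one_pow]
  have hAB : A - C (2 ^ h) * B = 0 := by
    apply uniq p hp
    · rw [map_sub, Lop_C_mul, hA, hB]; simp
    · rw [coeff_zero_eq_eval_zero, eval_sub, eval_mul, eval_C, eA, eB,
        sum_range_succ', sum_range_succ']
      simp [hα0, hβ0, h16]
    · have : (A - C (2 ^ h) * B).natDegree ≤ 2 * h :=
        (natDegree_sub_le _ _).trans
          (max_le dA ((natDegree_C_mul_le _ _).trans (dB.trans (by omega))))
      omega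
  have hev := congrArg (eval ((t : ZMod p) - 1)) hAB
  rw [eval_sub, eval_mul, eval_C, eA, eB, eval_zero, sub_eq_zero] at hev
  rw [show (p - 1) / 2 = h by omega, ← hN, legendreSym.eq_pow, ← hh]
  have hl : ∑ k ∈ Finset.range (h + 1),
        (Nat.choose (2 * k) k : ZMod p) ^ 2 * (Nat.choose (4 * k) (2 * k) : ZMod p) *
          ((1 - (t : ZMod p) ^ 2) / 256) ^ k =
      ∑ k ∈ range (h + 1), α k * (-(((t : ZMod p) - 1) * ((t : ZMod p) - 1 + 2))) ^ k := by
    apply sum_congr rfl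
    intro k _
    simp only [α, a]
    rw [div_pow, show -(((t : ZMod p) - 1) * ((t : ZMod p) - 1 + 2)) = 1 - (t : ZMod p) ^ 2 by ring]
    ring
  rw [hl, hev, mul_sum, mul_sum]
  apply sum_congr rfl
  intro k hk
  have hk' : k ≤ N := by simpa [Nat.lt_succ_iff] using hk
  simp only [β, b]
  push_cast
  rw [show (t : ZMod p) - 1 + 2 = t + 1 by ring,
    show 3 * ((t : ZMod p) - 1) + 8 = 3 * t + 5 by ring,
    show (10 + 6 * (t : ZMod p)) = 2 * (3 * t + 5) by ring, mul_pow 2 (3 * (t : ZMod p) + 5),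
    div_pow, mul_pow 64, ← pow_mul (3 * (t : ZMod p) + 5)]
  have hs : (3 * (t : ZMod p) + 5) ^ h =
    (3 * (t : ZMod p) + 5) ^ (h - 3 * k) * (3 * (t : ZMod p) + 5) ^ (3 * k) := by
    rw [← pow_add]; congr 1; omega
  rw [hs]
  have hne := pow_ne_zero (3 * k) htF
  have hne2 := pow_ne_zero k h64F
  generalize (3 * (t : ZMod p) + 5) ^ (3 * k) = y at *
  generalize (3 * (t : ZMod p) + 5) ^ (h - 3 * k) = z at *
  field_simp

end SunAux

theorem stmt_2 (p : ℕ) [Fact p.Prime] (hp : 3 < p) (t : ℤ)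
    (h1 : ¬ (3 * t ≡ 5 [ZMOD (p : ℤ)])) (h2 : ¬ (3 * t ≡ -5 [ZMOD (p : ℤ)])) :
    (∑ k ∈ Finset.range ((p - 1) / 2 + 1),
        (Nat.choose (2 * k) k : ZMod p) ^ 2 * (Nat.choose (4 * k) (2 * k) : ZMod p) *
          ((1 - (t : ZMod p) ^ 2) / 256) ^ k)
      = ((legendreSym p (10 + 6 * t) : ℤ) : ZMod p) *
          ∑ k ∈ Finset.range (p / 6 + 1),
            (Nat.choose (2 * k) k : ZMod p) * (Nat.choose (3 * k) k : ZMod p) *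
              (Nat.choose (6 * k) (3 * k) : ZMod p) *
              (((t : ZMod p) - 1) ^ 2 * ((t : ZMod p) + 1) /
                (64 * (3 * (t : ZMod p) + 5) ^ 3)) ^ k
    ∧
    (∑ k ∈ Finset.range ((p - 1) / 2 + 1),
        (Nat.choose (2 * k) k : ZMod p) ^ 2 * (Nat.choose (4 * k) (2 * k) : ZMod p) *
          ((1 - (t : ZMod p) ^ 2) / 256) ^ k)
      = ((legendreSym p (10 - 6 * t) : ℤ) : ZMod p) *
          ∑ k ∈ Finset.range (p / 6 + 1),
            (Nat.choose (2 * k) k : ZMod p) * (Nat.choose (3 * k) k : ZMod p) *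
              (Nat.choose (6 * k) (3 * k) : ZMod p) *
              (((t : ZMod p) + 1) ^ 2 * ((t : ZMod p) - 1) /
                (64 * (3 * (t : ZMod p) - 5) ^ 3)) ^ k := by
  refine ⟨SunAux.main p hp t h2, ?_⟩
  have h := SunAux.main p hp (-t) (by
    intro h
    apply h1
    have := h.neg
    simpa using this)
  rw [show 10 - 6 * t = 10 + 6 * (-t) by ring]
  rw [show ((-t : ℤ) : ZMod p) = -(t : ZMod p) by push_cast; ring, neg_sq] at h
  rw [h]
  congr 1
  apply Finset.sum_congr rfl
  intro k _
  congr 2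
  rw [show 64 * (3 * -(t : ZMod p) + 5) ^ 3 = -(64 * (3 * (t : ZMod p) - 5) ^ 3) by ring,
    show (-(t : ZMod p) - 1) ^ 2 * (-(t : ZMod p) + 1) =
      -(((t : ZMod p) + 1) ^ 2 * ((t : ZMod p) - 1)) by ring, neg_div_neg_eq]
end

section
/- For every nonnegative integer n, Σ_{k=0}^{⌊n/2⌋} C(2k,k)^2 · C(3k,k) · C(n+k,3k) · 4^{n-2k} = Σ_{k=0}^{n} C(2k,k) · C(2n-2k,n-k) · C(n,k)^2. -/
open Finset

namespace DombAux

/-- Summand of the left side. -/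
def F (n k : ℕ) : ℚ :=
  (Nat.choose (2 * k) k : ℚ) ^ 2 * Nat.choose (3 * k) k * Nat.choose (n + k) (3 * k) *
    4 ^ (n - 2 * k)

/-- Summand of the right side. -/
def H (n k : ℕ) : ℚ :=
  (Nat.choose (2 * k) k : ℚ) * Nat.choose (2 * n - 2 * k) (n - k) * (Nat.choose n k : ℚ) ^ 2

lemma F_zero {n k : ℕ} (h : n < 2 * k) : F n k = 0 := by
  unfold F
  rw [Nat.choose_eq_zero_of_lt (show n + k < 3 * k by omega)]
  simp

lemma H_zero {n k : ℕ} (h : n < k) : H n k = 0 := by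
  unfold H
  rw [Nat.choose_eq_zero_of_lt h]
  simp

lemma F_eq (m k : ℕ) : F (2 * k + m) k =
    ((2 * k).factorial : ℚ) * (3 * k + m).factorial /
      ((k.factorial : ℚ) ^ 5 * m.factorial) * 4 ^ m := by
  unfold F
  rw [show 2 * k + m + k = 3 * k + m by ring, Nat.cast_choose ℚ (show k ≤ 2 * k by omega),
    Nat.cast_choose ℚ (show k ≤ 3 * k by omega),
    Nat.cast_choose ℚ (show 3 * k ≤ 3 * k + m by omega),
    show 2 * k - k = k by omega, show 3 * k - k = 2 * k by omega,
    show 3 * k + m - 3 * k = m by omega, show 2 * k + m - 2 * k = m by omega]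
  have h1 : (k.factorial : ℚ) ≠ 0 := by exact_mod_cast k.factorial_ne_zero
  have h2 : (m.factorial : ℚ) ≠ 0 := by exact_mod_cast m.factorial_ne_zero
  have h3 : ((2 * k).factorial : ℚ) ≠ 0 := by exact_mod_cast (2 * k).factorial_ne_zero
  have h4 : ((3 * k).factorial : ℚ) ≠ 0 := by exact_mod_cast (3 * k).factorial_ne_zero
  field_simp

lemma H_eq (m k : ℕ) : H (k + m) k =
    ((2 * k).factorial : ℚ) * (2 * m).factorial * ((k + m).factorial : ℚ) ^ 2 /
      ((k.factorial : ℚ) ^ 4 * (m.factorial : ℚ) ^ 4) := by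
  unfold H
  rw [show 2 * (k + m) - 2 * k = 2 * m by omega, show k + m - k = m by omega,
    Nat.cast_choose ℚ (show k ≤ 2 * k by omega),
    Nat.cast_choose ℚ (show m ≤ 2 * m by omega),
    Nat.cast_choose ℚ (show k ≤ k + m by omega),
    show 2 * k - k = k by omega, show 2 * m - m = m by omega,
    show k + m - k = m by omega]
  have h1 : (k.factorial : ℚ) ≠ 0 := by exact_mod_cast k.factorial_ne_zero
  have h2 : (m.factorial : ℚ) ≠ 0 := by exact_mod_cast m.factorial_ne_zero
  field_simp

lemma F_n (n k : ℕ) :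
    F (n + 1) k * ((n : ℚ) + 1 - 2 * k) = 4 * ((n : ℚ) + 1 + k) * F n k := by
  rcases lt_or_ge n (2 * k) with h | h
  · rw [F_zero h]
    rcases Nat.lt_or_ge (n + 1) (2 * k) with h' | h'
    · rw [F_zero h']; ring
    · have : (n : ℚ) + 1 = 2 * k := by exact_mod_cast (show n + 1 = 2 * k by omega)
      rw [this]; ring
  · obtain ⟨m, rfl⟩ := Nat.exists_eq_add_of_le h
    rw [show 2 * k + m + 1 = 2 * k + (m + 1) by ring, F_eq, F_eq,
      show 3 * k + (m + 1) = (3 * k + m) + 1 by ring, Nat.factorial_succ, Nat.factorial_succ]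
    have h1 : (k.factorial : ℚ) ≠ 0 := by exact_mod_cast k.factorial_ne_zero
    have h2 : (m.factorial : ℚ) ≠ 0 := by exact_mod_cast m.factorial_ne_zero
    have h3 : (m : ℚ) + 1 ≠ 0 := by positivity
    push_cast
    field_simp
    ring

lemma F_k (n k : ℕ) :
    8 * ((k : ℚ) + 1) ^ 4 * F n (k + 1) =
      (2 * k + 1) * ((n : ℚ) + k + 1) * (n - 2 * k) * (n - 2 * k - 1) * F n k := by
  rcases lt_or_ge n (2 * (k + 1)) with h | h
  · rw [F_zero h]
    rcases Nat.lt_or_ge n (2 * k) with h' | h'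
    · rw [F_zero h']; ring
    · have : n = 2 * k ∨ n = 2 * k + 1 := by omega
      rcases this with rfl | rfl <;> push_cast <;> ring
  · obtain ⟨m, rfl⟩ := Nat.exists_eq_add_of_le h
    rw [F_eq, show 2 * (k + 1) + m = 2 * k + (m + 2) by ring, F_eq,
      show 3 * (k + 1) + m = (3 * k + m) + 1 + 1 + 1 by ring,
      show 3 * k + (m + 2) = (3 * k + m) + 1 + 1 by ring,
      show m + 2 = m + 1 + 1 by ring,
      show 2 * (k + 1) = 2 * k + 1 + 1 by ring]
    simp only [Nat.factorial_succ]
    have h1 : (k.factorial : ℚ) ≠ 0 := by exact_mod_cast k.factorial_ne_zero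
    have h2 : (m.factorial : ℚ) ≠ 0 := by exact_mod_cast m.factorial_ne_zero
    have h3 : (m : ℚ) + 1 ≠ 0 := by positivity
    have h4 : (m : ℚ) + 1 + 1 ≠ 0 := by positivity
    have h5 : (k : ℚ) + 1 ≠ 0 := by positivity
    push_cast
    field_simp
    ring

lemma H_n (n k : ℕ) :
    H (n + 1) k * ((n : ℚ) + 1 - k) ^ 3 =
      2 * (2 * (n : ℚ) - 2 * k + 1) * ((n : ℚ) + 1) ^ 2 * H n k := by
  rcases lt_or_ge n k with h | h
  · rw [H_zero h]
    rcases Nat.lt_or_ge (n + 1) k with h' | h'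
    · rw [H_zero h']; ring
    · have : (n : ℚ) + 1 = k := by exact_mod_cast (show n + 1 = k by omega)
      rw [this]; ring
  · obtain ⟨m, rfl⟩ := Nat.exists_eq_add_of_le h
    rw [show k + m + 1 = k + (m + 1) by ring, H_eq, H_eq,
      show k + (m + 1) = (k + m) + 1 by ring, show 2 * (m + 1) = 2 * m + 1 + 1 by ring]
    simp only [Nat.factorial_succ]
    have h1 : (k.factorial : ℚ) ≠ 0 := by exact_mod_cast k.factorial_ne_zero
    have h2 : (m.factorial : ℚ) ≠ 0 := by exact_mod_cast m.factorial_ne_zero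
    have h3 : (m : ℚ) + 1 ≠ 0 := by positivity
    push_cast
    field_simp
    ring

lemma H_k (n k : ℕ) :
    ((k : ℚ) + 1) ^ 3 * (2 * (n : ℚ) - 2 * k - 1) * H n (k + 1) =
      (2 * k + 1) * ((n : ℚ) - k) ^ 3 * H n k := by
  rcases lt_or_ge n (k + 1) with h | h
  · rw [H_zero h]
    rcases Nat.lt_or_ge n k with h' | h'
    · rw [H_zero h']; ring
    · have : n = k := by omega
      rw [this]; ring
  · obtain ⟨m, rfl⟩ := Nat.exists_eq_add_of_le h
    rw [H_eq, show k + 1 + m = k + (m + 1) by ring, H_eq,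
      show 2 * (m + 1) = 2 * m + 1 + 1 by ring, show 2 * (k + 1) = 2 * k + 1 + 1 by ring]
    simp only [Nat.factorial_succ]
    have h1 : (k.factorial : ℚ) ≠ 0 := by exact_mod_cast k.factorial_ne_zero
    have h2 : (m.factorial : ℚ) ≠ 0 := by exact_mod_cast m.factorial_ne_zero
    have h3 : (m : ℚ) + 1 ≠ 0 := by positivity
    have h5 : (k : ℚ) + 1 ≠ 0 := by positivity
    push_cast
    field_simp
    ring

/-- Zeilberger certificate for the left side. -/
def GF (n k : ℕ) : ℚ :=
  -12 * (3 * n + 4) * (k : ℚ) ^ 4 * F (n + 2) k / (((n : ℚ) + 1 + k) * (n + 2 + k))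

/-- Zeilberger certificate for the right side. -/
def GH (n k : ℕ) : ℚ :=
  H (n + 2) k * (k : ℚ) ^ 3 *
    (16 * (k : ℚ) ^ 3 - (120 + 72 * n) * (k : ℚ) ^ 2 + (296 + 356 * n + 104 * (n : ℚ) ^ 2) * k
      - (224 + 416 * n + 248 * (n : ℚ) ^ 2 + 48 * (n : ℚ) ^ 3)) /
    (4 * (2 * (n : ℚ) - 2 * k + 3) * ((n : ℚ) + 2) ^ 2)

lemma F_tele (n k : ℕ) :
    ((n : ℚ) + 2) ^ 3 * F (n + 2) k
      - 2 * (2 * n + 3) * (5 * (n : ℚ) ^ 2 + 15 * n + 12) * F (n + 1) k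
      + 64 * ((n : ℚ) + 1) ^ 3 * F n k = GF n (k + 1) - GF n k := by
  have e1 := F_n n k
  have e2 := F_n (n + 1) k
  have e3 := F_k (n + 2) k
  unfold GF
  push_cast at *
  have p1 : (n : ℚ) + 1 + k ≠ 0 := by positivity
  have p2 : (n : ℚ) + 2 + k ≠ 0 := by positivity
  have p3 : (n : ℚ) + 3 + k ≠ 0 := by positivity
  have p4 : (k : ℚ) + 1 ≠ 0 := by positivity
  have f1 : F (n + 1) k = F (n + 2) k * ((n : ℚ) + 2 - 2 * k) / (4 * (n + 2 + k)) := by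
    rw [eq_div_iff (by positivity)]
    linear_combination -e2
  have f0 : F n k = F (n + 1) k * ((n : ℚ) + 1 - 2 * k) / (4 * (n + 1 + k)) := by
    rw [eq_div_iff (by positivity)]
    linear_combination -e1
  have f3 : F (n + 2) (k + 1) = (2 * k + 1) * ((n : ℚ) + 3 + k) * (n + 2 - 2 * k) *
      (n + 1 - 2 * k) * F (n + 2) k / (8 * ((k : ℚ) + 1) ^ 4) := by
    rw [eq_div_iff (by positivity)]
    linear_combination e3
  rw [f0, f1, f3, show (n : ℚ) + 1 + (k + 1) = n + 2 + k by ring,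
    show (n : ℚ) + 2 + (k + 1) = n + 3 + k by ring]
  field_simp
  ring

lemma odd_ne (n k c : ℤ) : (2 * (n : ℚ) - 2 * k + (2 * c + 1)) ≠ 0 := by
  intro h
  have : 2 * n - 2 * k + (2 * c + 1) = 0 := by exact_mod_cast h
  omega

lemma H_tele (n k : ℕ) :
    ((n : ℚ) + 2) ^ 3 * H (n + 2) k
      - 2 * (2 * n + 3) * (5 * (n : ℚ) ^ 2 + 15 * n + 12) * H (n + 1) k
      + 64 * ((n : ℚ) + 1) ^ 3 * H n k = GH n (k + 1) - GH n k := by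
  have e1 := H_n n k
  have e2 := H_n (n + 1) k
  have e3 := H_k (n + 2) k
  unfold GH
  push_cast at *
  have q1 : (2 * (n : ℚ) - 2 * k + 1) ≠ 0 := by
    have := odd_ne n k 0
    push_cast at this
    convert this using 2; ring
  have q3 : (2 * (n : ℚ) - 2 * k + 3) ≠ 0 := by
    have := odd_ne n k 1
    push_cast at this
    convert this using 2; ring
  have p1 : (n : ℚ) + 1 ≠ 0 := by positivity
  have p2 : (n : ℚ) + 2 ≠ 0 := by positivity
  have p4 : (k : ℚ) + 1 ≠ 0 := by positivity
  have f1 : H (n + 1) k = H (n + 2) k * ((n : ℚ) + 2 - k) ^ 3 /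
      (2 * (2 * (n : ℚ) - 2 * k + 3) * ((n : ℚ) + 2) ^ 2) := by
    rw [eq_div_iff (by simp [q3, p2])]
    linear_combination -e2
  have f0 : H n k = H (n + 1) k * ((n : ℚ) + 1 - k) ^ 3 /
      (2 * (2 * (n : ℚ) - 2 * k + 1) * ((n : ℚ) + 1) ^ 2) := by
    rw [eq_div_iff (by simp [q1, p1])]
    linear_combination -e1
  have f3 : H (n + 2) (k + 1) = (2 * k + 1) * ((n : ℚ) + 2 - k) ^ 3 * H (n + 2) k /
      (((k : ℚ) + 1) ^ 3 * (2 * (n : ℚ) - 2 * k + 3)) := by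
    rw [eq_div_iff (by simp [q3, p4])]
    linear_combination e3
  rw [f0, f1, f3, show 2 * (n : ℚ) - 2 * (k + 1) + 3 = 2 * n - 2 * k + 1 by ring]
  generalize hx : 2 * (n : ℚ) - 2 * k + 1 = x at *
  generalize hy : 2 * (n : ℚ) - 2 * k + 3 = y at *
  field_simp
  subst hx hy
  ring

/-- Left sum. -/
def A (n : ℕ) : ℚ := ∑ k ∈ Finset.range (n / 2 + 1), F n k

/-- Right sum. -/
def B (n : ℕ) : ℚ := ∑ k ∈ Finset.range (n + 1), H n k

lemma A_ext (n N : ℕ) (h : n < N) : A n = ∑ k ∈ Finset.range N, F n k := by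
  unfold A
  apply Finset.sum_subset
  · intro x; simp only [Finset.mem_range]; omega
  · intro x _ hx
    simp only [Finset.mem_range] at hx
    exact F_zero (by omega)

lemma B_ext (n N : ℕ) (h : n < N) : B n = ∑ k ∈ Finset.range N, H n k := by
  unfold B
  apply Finset.sum_subset
  · intro x; simp only [Finset.mem_range]; omega
  · intro x _ hx
    simp only [Finset.mem_range] at hx
    exact H_zero (by omega)

lemma A_rec (n : ℕ) :
    ((n : ℚ) + 2) ^ 3 * A (n + 2)
      - 2 * (2 * n + 3) * (5 * (n : ℚ) ^ 2 + 15 * n + 12) * A (n + 1)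
      + 64 * ((n : ℚ) + 1) ^ 3 * A n = 0 := by
  rw [A_ext n (n + 3) (by omega), A_ext (n + 1) (n + 3) (by omega),
    A_ext (n + 2) (n + 3) (by omega), Finset.mul_sum, Finset.mul_sum, Finset.mul_sum,
    ← Finset.sum_sub_distrib, ← Finset.sum_add_distrib,
    Finset.sum_congr rfl (fun k _ => F_tele n k), Finset.sum_range_sub]
  unfold GF
  rw [F_zero (show n + 2 < 2 * (n + 3) by omega)]
  simp

lemma B_rec (n : ℕ) :
    ((n : ℚ) + 2) ^ 3 * B (n + 2)
      - 2 * (2 * n + 3) * (5 * (n : ℚ) ^ 2 + 15 * n + 12) * B (n + 1)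
      + 64 * ((n : ℚ) + 1) ^ 3 * B n = 0 := by
  rw [B_ext n (n + 3) (by omega), B_ext (n + 1) (n + 3) (by omega),
    B_ext (n + 2) (n + 3) (by omega), Finset.mul_sum, Finset.mul_sum, Finset.mul_sum,
    ← Finset.sum_sub_distrib, ← Finset.sum_add_distrib,
    Finset.sum_congr rfl (fun k _ => H_tele n k), Finset.sum_range_sub]
  unfold GH
  rw [H_zero (show n + 2 < n + 3 by omega)]
  simp

lemma A_eq_B (n : ℕ) : A n = B n ∧ A (n + 1) = B (n + 1) := by
  induction n with
  | zero =>
    constructor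
    · simp [A, B, F, H]
    · norm_num [A, B, F, H, Finset.sum_range_succ]
  | succ n ih =>
    refine ⟨ih.2, ?_⟩
    have h1 := A_rec n
    have h2 := B_rec n
    rw [ih.1, ih.2] at h1
    have p : ((n : ℚ) + 2) ^ 3 ≠ 0 := by positivity
    apply mul_left_cancel₀ p
    linear_combination h1 - h2

end DombAux

theorem stmt_3 (n : ℕ) :
    ∑ k ∈ Finset.range (n / 2 + 1),
        Nat.choose (2 * k) k ^ 2 * Nat.choose (3 * k) k * Nat.choose (n + k) (3 * k) *
          4 ^ (n - 2 * k)
      = ∑ k ∈ Finset.range (n + 1),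
          Nat.choose (2 * k) k * Nat.choose (2 * n - 2 * k) (n - k) * Nat.choose n k ^ 2 := by
  have h := (DombAux.A_eq_B n).1
  unfold DombAux.A DombAux.B DombAux.F DombAux.H at h
  exact_mod_cast h
end

section
/- Let p be an odd prime and let u be an integer with 4u ≢ 1 (mod p). Then Σ_{n=0}^{p-1} A_n · u^n ≡ Σ_{k=0}^{p-1} C(2k,k)^2 · C(3k,k) · (u^2/(1-4u)^3)^k (mod p). -/
open Finset

/-- `A n = ∑_{k=0}^{n} C(2k,k)·C(2n-2k,n-k)·C(n,k)^2`. -/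
def A (n : ℕ) : ℕ :=
  ∑ k ∈ Finset.range (n + 1),
    Nat.choose (2 * k) k * Nat.choose (2 * n - 2 * k) (n - k) * Nat.choose n k ^ 2

namespace Domb

/-- the summand of `A`, as a rational number -/
def T (n k : ℕ) : ℚ :=
  (Nat.choose (2 * k) k * Nat.choose (2 * n - 2 * k) (n - k) * Nat.choose n k ^ 2 : ℕ)

lemma fne (n : ℕ) : (n.factorial : ℚ) ≠ 0 := by exact_mod_cast n.factorial_ne_zero

lemma T_eq (j k : ℕ) : T (j + k) k =
    ((j + k).factorial : ℚ) ^ 2 * (2 * k).factorial * (2 * j).factorial /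
      ((k.factorial : ℚ) ^ 4 * (j.factorial : ℚ) ^ 4) := by
  unfold T
  have h1 : 2 * (j + k) - 2 * k = 2 * j := by omega
  have h2 : j + k - k = j := by omega
  rw [h1, h2]
  push_cast
  rw [Nat.cast_choose ℚ (show k ≤ 2 * k by omega), Nat.cast_choose ℚ (show j ≤ 2 * j by omega),
    Nat.cast_choose ℚ (show k ≤ j + k by omega), h2, show 2 * k - k = k by omega,
    show 2 * j - j = j by omega]
  have := fne k
  have := fne j
  field_simp

/-- base hypergeometric term -/
def H (j k : ℕ) : ℚ :=
    ((j + k).factorial : ℚ) ^ 2 * (2 * k).factorial * (2 * j).factorial /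
      ((k.factorial : ℚ) ^ 4 * ((j + 2).factorial : ℚ) ^ 4)

lemma T0 (j k : ℕ) : T (j + k) k = ((j + 1 : ℚ) * (j + 2)) ^ 4 * H j k := by
  rw [T_eq, H]
  have := fne k
  have := fne j
  simp only [Nat.factorial_succ]
  push_cast
  have : (j + 1 : ℚ) ≠ 0 := by positivity
  have : (j + 1 + 1 : ℚ) ≠ 0 := by positivity
  field_simp
  ring

lemma T1 (j k : ℕ) : T (j + k + 1) k =
    (j + k + 1 : ℚ) ^ 2 * (2 * j + 2) * (2 * j + 1) * (j + 2) ^ 4 * H j k := by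
  rw [show j + k + 1 = (j + 1) + k by ring, T_eq, H]
  have := fne k
  have := fne j
  rw [show j + 1 + k = (j + k) + 1 by ring, show 2 * (j + 1) = 2 * j + 1 + 1 by ring]
  simp only [Nat.factorial_succ]
  push_cast
  have : (j + 1 : ℚ) ≠ 0 := by positivity
  have : (j + 1 + 1 : ℚ) ≠ 0 := by positivity
  field_simp
  ring

lemma T2 (j k : ℕ) : T (j + k + 2) k =
    (j + k + 1 : ℚ) ^ 2 * (j + k + 2) ^ 2 * (2 * j + 4) * (2 * j + 3) * (2 * j + 2) * (2 * j + 1)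
      * H j k := by
  rw [show j + k + 2 = (j + 2) + k by ring, T_eq, H]
  have := fne k
  have := fne j
  rw [show j + 2 + k = (j + k) + 1 + 1 by ring, show 2 * (j + 2) = 2 * j + 1 + 1 + 1 + 1 by ring]
  simp only [Nat.factorial_succ]
  push_cast
  have : (j + 1 : ℚ) ≠ 0 := by positivity
  have : (j + 1 + 1 : ℚ) ≠ 0 := by positivity
  field_simp
  ring

lemma H_shift (j k : ℕ) :
    (k + 1 : ℚ) ^ 3 * (2 * j + 1) * (j + 1) * H j (k + 1) =
      (2 * k + 1) * (j + 3) ^ 4 * H (j + 1) k := by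
  unfold H
  have := fne k
  have := fne j
  rw [show j + 1 + k = (j + k) + 1 by ring, show j + (k + 1) = (j + k) + 1 by ring,
    show 2 * (j + 1) = 2 * j + 1 + 1 by ring, show 2 * (k + 1) = 2 * k + 1 + 1 by ring]
  simp only [Nat.factorial_succ]
  push_cast
  have : (j + 1 : ℚ) ≠ 0 := by positivity
  have : (k + 1 : ℚ) ≠ 0 := by positivity
  have : (j + 1 + 1 : ℚ) ≠ 0 := by positivity
  have : (j + 2 + 1 : ℚ) ≠ 0 := by positivity
  have : (j + 1 + 1 + 1 : ℚ) ≠ 0 := by positivity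
  field_simp
  ring

/-- certificate polynomial -/
def s (n k : ℚ) : ℚ := (n + 1) ^ 2 * (16 * k ^ 3 - (120 + 72 * n) * k ^ 2
  + (296 + 356 * n + 104 * n ^ 2) * k - (224 + 416 * n + 248 * n ^ 2 + 48 * n ^ 3))

/-- the operator of the Domb recurrence -/
def L (n : ℚ) (a b c : ℚ) : ℚ :=
  (n + 2) ^ 3 * c - 2 * (2 * n + 3) * (5 * n ^ 2 + 15 * n + 12) * b + 64 * (n + 1) ^ 3 * a

lemma L_T (j k : ℕ) : L (j + k : ℚ) (T (j + k) k) (T (j + k + 1) k) (T (j + k + 2) k) =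
    s (j + k) (k + 1) * (j + 1) * (2 * k + 1) * (j + 2) ^ 4 * H j k
      - k ^ 3 * s (j + k) k * (j + 2) * (2 * j + 1) * (j + 1) * H j k := by
  rw [T0, T1, T2]
  unfold L s
  ring

lemma partialT (n m : ℕ) (hm : m ≤ n) :
    ∑ k ∈ range (m + 1), L n (T n k) (T (n + 1) k) (T (n + 2) k) =
      s n (m + 1) * ((n - m : ℕ) + 1) * (2 * m + 1) * ((n - m : ℕ) + 2) ^ 4 * H (n - m) m := by
  induction m with
  | zero =>
    have := L_T n 0
    simp only [Nat.add_zero, Nat.cast_zero, add_zero] at this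
    simp [this]
  | succ m ih =>
    rw [sum_range_succ, ih (by omega)]
    obtain ⟨j, rfl⟩ : ∃ j, n = j + (m + 1) := ⟨n - (m + 1), by omega⟩
    have h := L_T j (m + 1)
    have h2 := H_shift j m
    have e1 : j + (m + 1) - m = j + 1 := by omega
    have e2 : j + (m + 1) - (m + 1) = j := by omega
    rw [e1, e2]
    push_cast at h ⊢
    rw [h]
    linear_combination (-s (j + (m + 1)) (m + 1) * (j + 2)) * h2

lemma A_sum (n : ℕ) : (A n : ℚ) = ∑ k ∈ range (n + 1), T n k := by
  unfold A T
  push_cast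
  rfl

lemma A_rec (n : ℕ) : L n (A n) (A (n + 1)) (A (n + 2)) = 0 := by
  have h := partialT n n le_rfl
  have e0 := T_eq 0 (n + 1)
  have e1 := T_eq 1 (n + 1)
  have e2 := T_eq 0 (n + 2)
  rw [A_sum, A_sum, A_sum, sum_range_succ _ (n + 2), sum_range_succ _ (n + 1),
    sum_range_succ _ (n + 1)]
  have h' : L n (∑ k ∈ range (n + 1), T n k) (∑ k ∈ range (n + 1), T (n + 1) k)
      (∑ k ∈ range (n + 1), T (n + 2) k) =
      ∑ k ∈ range (n + 1), L n (T n k) (T (n + 1) k) (T (n + 2) k) := by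
    unfold L
    simp only [sum_add_distrib, sum_sub_distrib, mul_sum]
  rw [h] at h'
  rw [zero_add] at e0 e2
  rw [show 1 + (n + 1) = n + 2 by ring] at e1
  have hc : L n (∑ k ∈ range (n + 1), T n k) (∑ k ∈ range (n + 1), T (n + 1) k + T (n + 1) (n + 1))
      (∑ k ∈ range (n + 1), T (n + 2) k + T (n + 2) (n + 1) + T (n + 2) (n + 2)) =
      L n (∑ k ∈ range (n + 1), T n k) (∑ k ∈ range (n + 1), T (n + 1) k)
      (∑ k ∈ range (n + 1), T (n + 2) k) +
      L n 0 (T (n + 1) (n + 1)) (T (n + 2) (n + 1) + T (n + 2) (n + 2)) := by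
    unfold L
    ring
  rw [hc, h', e0, e1, e2]
  unfold L H s
  have := fne n
  rw [show 2 * (n + 2) = 2 * n + 1 + 1 + 1 + 1 by ring, show 2 * (n + 1) = 2 * n + 1 + 1 by ring]
  simp only [Nat.sub_self, zero_add, mul_zero, Nat.factorial_succ, Nat.factorial_zero, mul_one]
  push_cast
  have : (n + 1 : ℚ) ≠ 0 := by positivity
  have : (n + 1 + 1 : ℚ) ≠ 0 := by positivity
  field_simp
  ring

/-- the transformed summand -/
def F (n k : ℕ) : ℕ :=
  Nat.choose (2 * k) k ^ 2 * Nat.choose (3 * k) k * Nat.choose (n + k) (3 * k) * 4 ^ (n - 2 * k)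

/-- base term for `F` -/
def K (n k : ℕ) : ℚ := if 2 * k ≤ n + 2 then
  ((n + k).factorial : ℚ) * (2 * k).factorial / ((n + 2 - 2 * k).factorial * (k.factorial : ℚ) ^ 5)
    * 4 ^ n / 16 ^ k else 0

lemma F_zero (n k : ℕ) (h : n < 2 * k) : F n k = 0 := by
  unfold F
  rw [Nat.choose_eq_zero_of_lt (show n + k < 3 * k by omega)]
  simp

lemma F_eq (i k : ℕ) : (F (i + 2 * k) k : ℚ) =
   ((i + 2 * k + k).factorial : ℚ) * (2 * k).factorial / (i.factorial * (k.factorial : ℚ) ^ 5)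
    * 4 ^ i := by
  unfold F
  push_cast
  rw [Nat.cast_choose ℚ (show k ≤ 2 * k by omega), Nat.cast_choose ℚ (show k ≤ 3 * k by omega),
    Nat.cast_choose ℚ (show 3 * k ≤ i + 2 * k + k by omega), show 2 * k - k = k by omega,
    show 3 * k - k = 2 * k by omega, show i + 2 * k + k - 3 * k = i by omega,
    show i + 2 * k - 2 * k = i by omega]
  have := fne k
  have := fne i
  have := fne (2 * k)
  have := fne (3 * k)
  field_simp

lemma F0 (n k : ℕ) : (F n k : ℚ) = (n + 2 - 2 * k) * (n + 1 - 2 * k) * K n k := by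
  rcases lt_or_ge n (2 * k) with h | h
  · rw [F_zero n k h]
    unfold K
    split_ifs with h2
    · have : n + 1 = 2 * k ∨ n + 2 = 2 * k := by omega
      rcases this with h3 | h3
      · have : (n + 1 : ℚ) = 2 * k := by exact_mod_cast h3
        rw [this]; simp
      · have : (n + 2 : ℚ) = 2 * k := by exact_mod_cast h3
        rw [this]; simp
    · simp
  · obtain ⟨i, rfl⟩ : ∃ i, n = i + 2 * k := ⟨n - 2 * k, by omega⟩
    rw [F_eq, K, if_pos (by omega), show i + 2 * k + 2 - 2 * k = i + 1 + 1 by omega,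
      pow_add, pow_mul]
    have := fne k
    have := fne i
    simp only [Nat.factorial_succ]
    push_cast
    have : (i + 1 : ℚ) ≠ 0 := by positivity
    have : (i + 1 + 1 : ℚ) ≠ 0 := by positivity
    norm_num
    field_simp
    ring

lemma F1 (n k : ℕ) : (F (n + 1) k : ℚ) = 4 * (n + 1 + k) * (n + 2 - 2 * k) * K n k := by
  rcases lt_or_ge (n + 1) (2 * k) with h | h
  · rw [F_zero _ k h]
    unfold K
    split_ifs with h2
    · have h3 : n + 2 = 2 * k := by omega
      have : (n + 2 : ℚ) = 2 * k := by exact_mod_cast h3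
      rw [this]; simp
    · simp
  · obtain ⟨i, hi⟩ : ∃ i, n + 1 = i + 2 * k := ⟨n + 1 - 2 * k, by omega⟩
    have hq : (n + 1 : ℚ) = i + 2 * k := by exact_mod_cast hi
    have h4 : (4 : ℚ) * 4 ^ n = 4 ^ i * 16 ^ k := by
      rw [← pow_succ', hi, pow_add, pow_mul]; norm_num
    rw [K, if_pos (by omega), hi, F_eq, show n + 2 - 2 * k = i + 1 by omega,
      ← hi, show n + 1 + k = n + k + 1 by ring]
    have := fne k
    have := fne i
    simp only [Nat.factorial_succ]
    push_cast
    have : (i + 1 : ℚ) ≠ 0 := by positivity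
    rw [show (n + 2 - 2 * k : ℚ) = i + 1 by linarith]
    field_simp
    linear_combination (-(n + k + 1 : ℚ)) * h4

lemma F2 (n k : ℕ) : (F (n + 2) k : ℚ) = 16 * (n + 2 + k) * (n + 1 + k) * K n k := by
  rcases lt_or_ge (n + 2) (2 * k) with h | h
  · rw [F_zero _ k h]
    unfold K
    rw [if_neg (by omega)]
    simp
  · obtain ⟨i, hi⟩ : ∃ i, n + 2 = i + 2 * k := ⟨n + 2 - 2 * k, by omega⟩
    have h4 : (16 : ℚ) * 4 ^ n = 4 ^ i * 16 ^ k := by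
      have : (4 : ℚ) ^ (n + 2) = 4 ^ i * 16 ^ k := by
        rw [hi, pow_add, pow_mul]; norm_num
      rw [← this]; ring
    rw [K, if_pos (by omega), hi, F_eq, show i + 2 * k - 2 * k = i by omega,
      ← hi, show n + 2 + k = n + k + 1 + 1 by ring]
    have := fne k
    have := fne i
    simp only [Nat.factorial_succ]
    push_cast
    field_simp
    linear_combination (-(n + k + 1 + 1 : ℚ) * (n + k + 1)) * h4

lemma K_shift (n k : ℕ) : 8 * (k + 1 : ℚ) ^ 4 * K n (k + 1) =
    (n + k + 1) * (2 * k + 1) * (n + 2 - 2 * k) * (n + 1 - 2 * k) * K n k := by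
  rcases lt_or_ge n (2 * k) with h | h
  · have h0 := F0 n k
    rw [F_zero n k h] at h0
    have : K n (k + 1) = 0 := by
      unfold K; rw [if_neg (by omega)]
    rw [this]
    push_cast at h0
    linear_combination (n + k + 1 : ℚ) * (2 * k + 1) * h0
  · obtain ⟨i, rfl⟩ : ∃ i, n = i + 2 * k := ⟨n - 2 * k, by omega⟩
    rw [K, K, if_pos (by omega), if_pos (by omega), show i + 2 * k + 2 - 2 * k = i + 1 + 1 by omega,
      show i + 2 * k + 2 - 2 * (k + 1) = i by omega, show 2 * (k + 1) = 2 * k + 1 + 1 by ring,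
      ← add_assoc]
    have := fne k
    have := fne i
    simp only [Nat.factorial_succ]
    push_cast
    have : (i + 1 : ℚ) ≠ 0 := by positivity
    have : (i + 1 + 1 : ℚ) ≠ 0 := by positivity
    have : (k + 1 : ℚ) ≠ 0 := by positivity
    rw [pow_succ (16 : ℚ)]
    field_simp
    ring

lemma partialF (n m : ℕ) :
    ∑ k ∈ range m, L n (F n k) (F (n + 1) k) (F (n + 2) k) =
      -192 * (3 * n + 4) * m ^ 4 * K n m := by
  induction m with
  | zero => simp
  | succ m ih =>
    rw [sum_range_succ, ih, F0, F1, F2]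
    have h := K_shift n m
    unfold L
    push_cast
    linear_combination (24 * (3 * n + 4 : ℚ)) * h

/-- transformed sum -/
def B (n : ℕ) : ℕ := ∑ k ∈ range (n + 1), F n k

lemma B_ext (n m : ℕ) (h : n < m) : B n = ∑ k ∈ range m, F n k := by
  unfold B
  apply sum_subset
  · intro x; simp only [mem_range]; omega
  · intro x _ hx
    apply F_zero
    simp only [mem_range] at hx
    omega

lemma B_rec (n : ℕ) : L n (B n) (B (n + 1)) (B (n + 2)) = 0 := by
  rw [B_ext n (n + 3) (by omega), B_ext (n + 1) (n + 3) (by omega), B_ext (n + 2) (n + 3) (by omega)]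
  have h := partialF n (n + 3)
  have hK : K n (n + 3) = 0 := by unfold K; rw [if_neg (by omega)]
  rw [hK, mul_zero] at h
  rw [← h]
  unfold L
  push_cast
  simp only [sum_add_distrib, sum_sub_distrib, mul_sum]

lemma A_eq_B (n : ℕ) : A n = B n := by
  induction n using Nat.strong_induction_on with
  | _ n ih =>
    match n, ih with
    | 0, _ => decide
    | 1, _ => decide
    | n + 2, ih =>
      have h1 := A_rec n
      have h2 := B_rec n
      rw [ih n (by omega), ih (n + 1) (by omega)] at h1
      unfold L at h1 h2
      have h3 : ((n : ℚ) + 2) ^ 3 * (A (n + 2) : ℚ) = (n + 2) ^ 3 * B (n + 2) := by linarith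
      have h4 : ((n : ℚ) + 2) ^ 3 ≠ 0 := by positivity
      exact_mod_cast mul_left_cancel₀ h4 h3

lemma choose_mod (p : ℕ) [Fact p.Prime] (a N m : ℕ) (h : N + a + 1 = p) (hm : m < p) :
    (Nat.choose N m : ZMod p) * (-1) ^ m = (Nat.choose (m + a) a : ZMod p) := by
  induction m with
  | zero => simp
  | succ m ih =>
    have ih := ih (by omega)
    have hN : (N : ZMod p) = -(a + 1) := by
      have : ((N + a + 1 : ℕ) : ZMod p) = 0 := by rw [h]; simp
      push_cast at this
      linear_combination this
    have hne : ((m + 1 : ℕ) : ZMod p) ≠ 0 := by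
      rw [Ne, ZMod.natCast_eq_zero_iff]
      exact Nat.not_dvd_of_pos_of_lt (by omega) hm
    have h2 : (Nat.choose (m + 1 + a) a : ZMod p) * (m + 1) = Nat.choose (m + a) a * (m + a + 1) := by
      have := Nat.choose_mul_succ_eq (m + a) a
      rw [show m + a + 1 - a = m + 1 by omega, show m + a + 1 = m + 1 + a by ring] at this
      have := congrArg (Nat.cast (R := ZMod p)) this
      push_cast at this
      linear_combination -this
    have h1 : (Nat.choose N (m + 1) : ZMod p) * (m + 1) = Nat.choose N m * (N - m) := by
      rcases lt_or_ge N m with hl | hl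
      · rw [Nat.choose_eq_zero_of_lt hl, Nat.choose_eq_zero_of_lt (by omega)]; simp
      · have := congrArg (Nat.cast (R := ZMod p)) (Nat.choose_succ_right_eq N m)
        push_cast [Nat.cast_sub hl] at this
        exact this
    apply mul_right_cancel₀ hne
    push_cast
    rw [h2, ← ih, pow_succ]
    rw [hN] at h1
    linear_combination (-(-1) ^ m) * h1

lemma inner (p : ℕ) [Fact p.Prime] (k : ℕ) (hk : 3 * k < p) (x : ZMod p) (hx : 1 - 4 * x ≠ 0) :
    ∑ n ∈ range p, (Nat.choose (n + k) (3 * k) : ZMod p) * 4 ^ (n - 2 * k) * x ^ n =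
      (x ^ 2 / (1 - 4 * x) ^ 3) ^ k := by
  obtain ⟨N, hN⟩ : ∃ N, N + 3 * k + 1 = p := ⟨p - 1 - 3 * k, by omega⟩
  have hpow : (1 - 4 * x) ^ N * ((1 - 4 * x) ^ 3) ^ k = 1 := by
    rw [← pow_mul, ← pow_add]
    have := ZMod.pow_card_sub_one_eq_one hx
    rwa [show p - 1 = N + 3 * k by omega] at this
  have hne : ((1 - 4 * x) ^ 3) ^ k ≠ 0 := pow_ne_zero _ (pow_ne_zero _ hx)
  rw [div_pow, eq_div_iff hne]
  suffices hs : ∑ n ∈ range p, (Nat.choose (n + k) (3 * k) : ZMod p) * 4 ^ (n - 2 * k) * x ^ n =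
      (x ^ 2) ^ k * (1 - 4 * x) ^ N by
    rw [hs, mul_assoc, hpow, mul_one]
  have hp2 : p = 2 * k + (N + k + 1) := by omega
  have : ∑ n ∈ range p, (Nat.choose (n + k) (3 * k) : ZMod p) * 4 ^ (n - 2 * k) * x ^ n =
      ∑ m ∈ range (N + k + 1), (Nat.choose (m + 3 * k) (3 * k) : ZMod p) * 4 ^ m * x ^ (2 * k + m) := by
    rw [show range p = range (2 * k + (N + k + 1)) from congrArg range hp2, sum_range_add]
    rw [sum_eq_zero, zero_add]
    · apply sum_congr rfl
      intro m _
      rw [show 2 * k + m + k = m + 3 * k by ring, Nat.add_sub_cancel_left]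
    · intro n hn
      rw [mem_range] at hn
      rw [Nat.choose_eq_zero_of_lt (by omega)]
      simp
  rw [this, show (1 - 4 * x) = -(4 * x) + 1 by ring, add_pow, mul_sum]
  symm
  have h1 : ∀ m ∈ range (N + 1), (x ^ 2) ^ k * ((-(4 * x)) ^ m * 1 ^ (N - m) * (N.choose m : ZMod p))
      = (Nat.choose (m + 3 * k) (3 * k) : ZMod p) * 4 ^ m * x ^ (2 * k + m) := by
    intro m hm
    rw [mem_range] at hm
    rw [← choose_mod p (3 * k) N m hN (by omega), neg_pow (4 * x), mul_pow, one_pow, pow_add, pow_mul]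
    ring
  rw [sum_congr rfl h1]
  apply sum_subset
  · intro y; simp only [mem_range]; omega
  · intro m hm1 hm2
    simp only [mem_range] at hm1 hm2
    have : (Nat.choose (m + 3 * k) (3 * k) : ZMod p) = 0 := by
      rw [← choose_mod p (3 * k) N m hN (by omega), Nat.choose_eq_zero_of_lt (by omega)]
      simp
    rw [this]; simp

lemma coeff_zero (p : ℕ) [hp : Fact p.Prime] (k : ℕ) (hk : k < p) (h3 : p ≤ 3 * k) :
    (Nat.choose (2 * k) k : ZMod p) ^ 2 * (Nat.choose (3 * k) k : ZMod p) = 0 := by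
  rcases lt_or_ge (2 * k) p with h | h
  · have : (Nat.choose (3 * k) k : ZMod p) = 0 := by
      rw [ZMod.natCast_eq_zero_iff]
      exact hp.out.dvd_choose hk (by omega) h3
    rw [this, mul_zero]
  · have : (Nat.choose (2 * k) k : ZMod p) = 0 := by
      rw [ZMod.natCast_eq_zero_iff]
      exact hp.out.dvd_choose hk (by omega) h
    rw [this]; simp

end Domb

theorem stmt_4 (p : ℕ) [Fact p.Prime] (hodd : Odd p) (u : ℤ)
    (hu : ¬ (4 * u ≡ 1 [ZMOD (p : ℤ)])) :
    (∑ n ∈ Finset.range p, (A n : ZMod p) * (u : ZMod p) ^ n)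
      = ∑ k ∈ Finset.range p,
          (Nat.choose (2 * k) k : ZMod p) ^ 2 * (Nat.choose (3 * k) k : ZMod p) *
            ((u : ZMod p) ^ 2 / (1 - 4 * (u : ZMod p)) ^ 3) ^ k := by
  have hx : (1 - 4 * (u : ZMod p)) ≠ 0 := by
    intro h
    apply hu
    rw [← ZMod.intCast_eq_intCast_iff]
    push_cast
    linear_combination -h
  have h1 : ∀ n ∈ range p, (A n : ZMod p) * (u : ZMod p) ^ n =
      ∑ k ∈ range p, (Nat.choose (2 * k) k : ZMod p) ^ 2 * (Nat.choose (3 * k) k : ZMod p) *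
        ((Nat.choose (n + k) (3 * k) : ZMod p) * 4 ^ (n - 2 * k) * (u : ZMod p) ^ n) := by
    intro n hn
    rw [Domb.A_eq_B, Domb.B_ext n p (mem_range.mp hn)]
    unfold Domb.F
    push_cast
    rw [sum_mul]
    apply sum_congr rfl
    intro k _
    ring
  rw [sum_congr rfl h1, sum_comm]
  apply sum_congr rfl
  intro k hk
  rw [← mul_sum]
  rcases lt_or_ge (3 * k) p with h | h
  · rw [Domb.inner p k h _ hx]
  · rw [Domb.coeff_zero p k (mem_range.mp hk) h, zero_mul, zero_mul]
end
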